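/- arXiv:2108.00711 — 3 statements merged into one kernel-verified Lean document; each statement's English description precedes it below -/
import Mathlib

section
/- In the Nehari setting, let I(u) = Σ_x F(x,u(x)). Then I(su)/s² → ∞ as s → ∞ uniformly on weakly compact subsets of H¹(V)\{0}: for every subset W of H¹(V)\{0} that is compact in the weak topology of the Hilbert space H¹(V) and every M > 0, there exists K > 0 such that I(su)/s² > M for all s > K and all u ∈ W. -/
/-!
Since `f(x, t)/|t|` is monotone on each half-line and tends to `0` at the origin, `f(x, t)` has the
sign of `t`, so `F ≥ 0`; as `F(x, t) = O(t²)` near `0`, the sum `I(su)` converges and is bounded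
below by any single term `F(x, su(x))`.
Evaluation at a vertex is weakly continuous, so the open sets `{u | ∃ x, c < |u(x)|}`, `c > 0`,
cover a weakly compact `W ∌ 0`; they are nested, hence a single `c` works on all of `W`. For each
`u ∈ W` the superquadratic growth of `F`, applied at a vertex where `|u(x)| > c`, then gives the
bound as soon as `s c` exceeds a threshold independent of `u`.
-/

open scoped ENNReal

noncomputable section

/-- `H¹(V)`: as a set, the ℓ²-summable real functions on the vertex set;
the `H¹` norm is equivalent to the ℓ² norm by the uniform degree bound. -/
abbrev H1 (Vtx : Type*) := lp (fun _ : Vtx => ℝ) 2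

variable {Vtx : Type*}

/-- `Γ(u,v)(x) = (1/2) Σ_{y∼x} (u(y)-u(x))(v(y)-v(x))`. -/
def gammaProd (adj : Vtx → Vtx → Prop) (u v : Vtx → ℝ) (x : Vtx) : ℝ :=
  (1/2) * ∑' y : {y : Vtx // adj x y}, (u y.1 - u x) * (v y.1 - v x)

/-- `|∇u|²(x) = (1/2) Σ_{y∼x} (u(y)-u(x))²`. -/
def gradSq (adj : Vtx → Vtx → Prop) (u : Vtx → ℝ) (x : Vtx) : ℝ :=
  gammaProd adj u u x

/-- `Δu(x) = Σ_{y∼x} (u(y)-u(x))`. -/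
def graphLap (adj : Vtx → Vtx → Prop) (u : Vtx → ℝ) (x : Vtx) : ℝ :=
  ∑' y : {y : Vtx // adj x y}, (u y.1 - u x)

/-- the norm `‖u‖` induced by the potential `V`:
`‖u‖² = Σ_x (|∇u|²(x) + V(x)u(x)²)`. -/
def nrmV (adj : Vtx → Vtx → Prop) (Vp : Vtx → ℝ) (u : Vtx → ℝ) : ℝ :=
  Real.sqrt (∑' x, (gradSq adj u x + Vp x * (u x)^2))

/-- the `V`-norm of an element of `H¹`. -/
def nrmH (adj : Vtx → Vtx → Prop) (Vp : Vtx → ℝ) (u : H1 Vtx) : ℝ :=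
  nrmV adj Vp (fun y => u y)

/-- `⟨u,v⟩ = Σ_x (Γ(u,v)(x) + V(x)u(x)v(x))`. -/
def iprodH (adj : Vtx → Vtx → Prop) (Vp : Vtx → ℝ) (u v : H1 Vtx) : ℝ :=
  ∑' x, (gammaProd adj (fun y => u y) (fun y => v y) x + Vp x * u x * v x)

/-- the variational functional `Φ(u) = ½‖u‖² − Σ_x F(x,u(x))`. -/
def PhiF (adj : Vtx → Vtx → Prop) (Vp : Vtx → ℝ) (F : Vtx → ℝ → ℝ) (u : H1 Vtx) : ℝ :=
  (1/2) * ∑' x, (gradSq adj (fun y => u y) x + Vp x * (u x)^2) - ∑' x, F x (u x)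

/-- the Nehari manifold `N = {u ∈ H¹\{0} : Φ'(u)u = 0}`. -/
def Nehari (adj : Vtx → Vtx → Prop) (Vp : Vtx → ℝ) (F : Vtx → ℝ → ℝ) : Set (H1 Vtx) :=
  {u | u ≠ 0 ∧ fderiv ℝ (PhiF adj Vp F) u u = 0}

/-- adjacency of the lattice graph `ℤ^N`. -/
def adjZ (N : ℕ) (x y : Fin N → ℤ) : Prop := (∑ i, (x i - y i).natAbs) = 1

end

open Asymptotics Filter MeasureTheory Set Topology

theorem exists_pos_forall_mem_exists_lt_of_isCompact {ι X : Type*} [TopologicalSpace X]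
    {K : Set X} (hK : IsCompact K) {g : ι → X → ℝ} (hg : ∀ i, LowerSemicontinuous (g i))
    (hpos : ∀ x ∈ K, ∃ i, 0 < g i x) :
    ∃ c > 0, ∀ x ∈ K, ∃ i, c < g i x := by
  let U : Ioi (0 : ℝ) → Set X := fun c => ⋃ i, g i ⁻¹' Ioi (c : ℝ)
  have hU_open : ∀ c, IsOpen (U c) := fun c => isOpen_iUnion fun i => (hg i).isOpen_preimage c
  have hU_anti : Antitone U := fun c d hcd =>
    iUnion_mono fun i => preimage_mono (Ioi_subset_Ioi hcd)
  have hK_cover : K ⊆ ⋃ c, U c := by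
    intro x hx
    obtain ⟨i, hi⟩ := hpos x hx
    exact mem_iUnion.2 ⟨⟨g i x / 2, half_pos hi⟩, mem_iUnion.2 ⟨i, half_lt_self hi⟩⟩
  obtain ⟨⟨c, hc⟩, hKc⟩ := hK.elim_directed_cover U hU_open hK_cover hU_anti.directed_le
  exact ⟨c, hc, fun x hx => mem_iUnion.1 (hKc hx)⟩

theorem exists_pos_forall_mem_exists_lt_norm_of_isCompact_weak {ι 𝕜 E : Type*} [NormedField 𝕜]
    [AddCommGroup E] [Module 𝕜 E] [TopologicalSpace E] {W : Set E}
    (hW : IsCompact (toWeakSpace 𝕜 E '' W)) (φ : ι → StrongDual 𝕜 E)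
    (hφ : ∀ u ∈ W, ∃ i, φ i u ≠ 0) :
    ∃ c > 0, ∀ u ∈ W, ∃ i, c < ‖φ i u‖ := by
  have hcont : ∀ i, Continuous fun w : WeakSpace 𝕜 E => φ i ((toWeakSpace 𝕜 E).symm w) :=
    fun i => WeakBilin.eval_continuous (topDualPairing 𝕜 E).flip (φ i)
  obtain ⟨c, hc, hcW⟩ := exists_pos_forall_mem_exists_lt_of_isCompact hW
    (fun i => (hcont i).norm.lowerSemicontinuous)
    (forall_mem_image.2 fun u hu => (hφ u hu).imp fun i hi => norm_pos_iff.2 hi)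
  exact ⟨c, hc, fun u hu => hcW _ (mem_image_of_mem _ hu)⟩

theorem lp_two_summable_norm_sq {ι : Type*} {E : ι → Type*} [∀ i, NormedAddCommGroup (E i)]
    (u : lp E 2) : Summable fun i => ‖u i‖ ^ 2 := by
  simpa using (lp.memℓp u).summable (by simp)

theorem summable_apply_of_norm_le_mul_pow {ι E G : Type*} [NormedAddCommGroup E]
    [NormedAddCommGroup G] [CompleteSpace G] {F : ι → E → G} {C δ : ℝ} (hδ : 0 < δ) {n : ℕ}
    (hF : ∀ i v, ‖v‖ < δ → ‖F i v‖ ≤ C * ‖v‖ ^ n)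
    {u : ι → E} (hu : Summable fun i => ‖u i‖ ^ n) :
    Summable fun i => F i (u i) := by
  refine .of_norm_bounded_eventually (hu.mul_left C) ?_
  filter_upwards [hu.tendsto_cofinite_zero.eventually_lt_const (pow_pos hδ n)] with i hi
  exact hF i _ (lt_of_pow_lt_pow_left₀ n hδ.le hi)

theorem tendsto_div_abs_of_abs_le_mul {g : ℝ → ℝ}
    (hg : ∀ ε > 0, ∃ δ > 0, ∀ t, t ≠ 0 → |t| < δ → |g t| ≤ ε * |t|) :
    Tendsto (fun t => g t / |t|) (𝓝[≠] 0) (𝓝 0) := by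
  refine IsLittleO.tendsto_div_nhds_zero (isLittleO_iff.2 fun ε hε => ?_)
  obtain ⟨δ, hδ, hgδ⟩ := hg ε hε
  filter_upwards [self_mem_nhdsWithin, mem_nhdsWithin_of_mem_nhds (Metric.ball_mem_nhds 0 hδ)]
    with t ht0 ht
  simpa using hgδ t ht0 (by simpa using ht)

theorem mul_apply_nonneg_of_monotoneOn_div_abs {g : ℝ → ℝ}
    (hlim : Tendsto (fun t => g t / |t|) (𝓝[≠] 0) (𝓝 0))
    (hneg : MonotoneOn (fun t => g t / |t|) (Iio 0))
    (hpos : MonotoneOn (fun t => g t / |t|) (Ioi 0)) (t : ℝ) :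
    0 ≤ t * g t := by
  rcases lt_trichotomy t 0 with ht | rfl | ht
  · have hquot : g t / |t| ≤ 0 := by
      refine ge_of_tendsto (hlim.mono_left (nhdsLT_le_nhdsNE 0)) ?_
      filter_upwards [Ioo_mem_nhdsLT ht] with r hr
      exact hneg ht hr.2 hr.1.le
    rw [div_le_iff₀ (abs_pos.2 ht.ne), zero_mul] at hquot
    exact mul_nonneg_of_nonpos_of_nonpos ht.le hquot
  · simp
  · have hquot : 0 ≤ g t / |t| := by
      refine le_of_tendsto (hlim.mono_left (nhdsGT_le_nhdsNE 0)) ?_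
      filter_upwards [Ioo_mem_nhdsGT ht] with r hr
      exact hpos hr.1 ht hr.2.le
    rw [le_div_iff₀ (abs_pos.2 ht.ne'), zero_mul] at hquot
    exact mul_nonneg ht.le hquot

theorem integral_zero_nonneg_of_mul_apply_nonneg {g : ℝ → ℝ} (hg : ∀ s, 0 ≤ s * g s) (t : ℝ) :
    0 ≤ ∫ s in (0 : ℝ)..t, g s := by
  rcases le_total 0 t with ht | ht
  · rw [intervalIntegral.integral_of_le ht]
    exact setIntegral_nonneg measurableSet_Ioc fun s hs => nonneg_of_mul_nonneg_right (hg s) hs.1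
  · rw [intervalIntegral.integral_of_ge ht, integral_Ioc_eq_integral_Ioo, neg_nonneg]
    exact setIntegral_nonpos measurableSet_Ioo fun s hs =>
      nonpos_of_mul_nonneg_right (hg s) hs.2

theorem norm_integral_zero_le_mul_sq {G : Type*} [NormedAddCommGroup G] [NormedSpace ℝ G]
    {g : ℝ → G} {C δ : ℝ} (hC : 0 ≤ C) (hg : ∀ s, s ≠ 0 → |s| < δ → ‖g s‖ ≤ C * |s|)
    {t : ℝ} (ht : |t| < δ) :
    ‖∫ s in (0 : ℝ)..t, g s‖ ≤ C * |t| ^ 2 := by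
  have hbound : ∀ᵐ s, s ∈ uIoc 0 t → ‖g s‖ ≤ C * |t| := by
    filter_upwards [Measure.ae_ne volume 0] with s hs0 hs
    have hst : |s| ≤ |t| := by simpa using abs_sub_left_of_mem_uIcc (uIoc_subset_uIcc hs)
    exact (hg s hs0 (hst.trans_lt ht)).trans (by gcongr)
  calc ‖∫ s in (0 : ℝ)..t, g s‖
      ≤ C * |t| * |t - 0| := intervalIntegral.norm_integral_le_of_norm_le_const_ae hbound
    _ = C * |t| ^ 2 := by ring_nf

theorem lt_div_sq_of_div_sq_le {c s v y M : ℝ} (hM : 0 < M) (hc : 0 < c) (hcv : c < |v|)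
    (hy : M / c ^ 2 ≤ y / (s * v) ^ 2) :
    M < y / s ^ 2 := by
  have hv : 0 < v ^ 2 := by rw [← sq_abs]; have := hc.trans hcv; positivity
  calc M < M / c ^ 2 * v ^ 2 := by
        rw [div_mul_eq_mul_div, lt_div_iff₀ (by positivity), ← sq_abs v]
        gcongr
    _ ≤ y / (s * v) ^ 2 * v ^ 2 := by gcongr
    _ = y / s ^ 2 := by rw [mul_pow, ← div_div, div_mul_cancel₀ _ hv.ne']

theorem exists_pos_forall_lt_tsum_div_sq {ι : Type*} {F : ι → ℝ → ℝ} (hF : ∀ i t, 0 ≤ F i t)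
    (hsuper : ∀ M : ℝ, ∃ R > 0, ∀ i t, R ≤ |t| → M ≤ F i t / t ^ 2)
    {c M : ℝ} (hc : 0 < c) (hM : 0 < M) :
    ∃ K > 0, ∀ s : ℝ, K < s → ∀ u : ι → ℝ, (Summable fun i => F i (s * u i)) →
      (∃ i, c < |u i|) → M < (∑' i, F i (s * u i)) / s ^ 2 := by
  obtain ⟨R, hR, hFR⟩ := hsuper (M / c ^ 2)
  refine ⟨R / c, by positivity, ?_⟩
  rintro s hs u hsum ⟨i, hi⟩
  have hs0 : 0 < s := (div_pos hR hc).trans hs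
  have hlarge : R ≤ |s * u i| :=
    calc R ≤ s * c := ((div_lt_iff₀ hc).1 hs).le
      _ ≤ s * |u i| := by gcongr
      _ = |s * u i| := by rw [abs_mul, abs_of_pos hs0]
  calc M < F i (s * u i) / s ^ 2 := lt_div_sq_of_div_sq_le hM hc hi (hFR i _ hlarge)
    _ ≤ (∑' j, F j (s * u j)) / s ^ 2 := by
        gcongr
        exact hsum.le_tsum i fun j _ => hF j _

theorem stmt7_general {ι : Type*} (f : ι → ℝ → ℝ)
    (hsmall : ∀ ε > 0, ∃ δ > 0, ∀ x t, t ≠ 0 → |t| < δ → |f x t| ≤ ε * |t|)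
    (hmono : ∀ x, MonotoneOn (fun t => f x t / |t|) (Iio 0) ∧
      MonotoneOn (fun t => f x t / |t|) (Ioi 0))
    (F : ι → ℝ → ℝ) (hF : ∀ x t, F x t = ∫ s in (0 : ℝ)..t, f x s)
    (hsuper : ∀ M : ℝ, ∃ R > 0, ∀ x t, R ≤ |t| → M ≤ F x t / t ^ 2)
    (W : Set (H1 ι)) (hW0 : W ⊆ {u | u ≠ 0}) (hW : IsCompact (toWeakSpace ℝ (H1 ι) '' W))
    (M : ℝ) (hM : 0 < M) :
    ∃ K > 0, ∀ s : ℝ, K < s → ∀ u ∈ W, M < (∑' x, F x (s * u x)) / s ^ 2 := by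
  have hF_nonneg : ∀ x t, 0 ≤ F x t := fun x t => hF x t ▸
    integral_zero_nonneg_of_mul_apply_nonneg (mul_apply_nonneg_of_monotoneOn_div_abs
      (tendsto_div_abs_of_abs_le_mul fun ε hε => (hsmall ε hε).imp fun _ h => ⟨h.1, h.2 x⟩)
      (hmono x).1 (hmono x).2) t
  obtain ⟨δ, hδ, hfδ⟩ := hsmall 1 one_pos
  have hF_quad : ∀ x t, ‖t‖ < δ → ‖F x t‖ ≤ 1 * ‖t‖ ^ 2 := fun x t ht => hF x t ▸
    norm_integral_zero_le_mul_sq zero_le_one (hfδ x) ht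
  have hF_summable : ∀ (s : ℝ) (u : H1 ι), Summable fun x => F x (s * u x) := fun s u =>
    summable_apply_of_norm_le_mul_pow hδ hF_quad (by simpa using lp_two_summable_norm_sq (s • u))
  obtain ⟨c, hc, hcW⟩ := exists_pos_forall_mem_exists_lt_norm_of_isCompact_weak hW
    (lp.evalCLM ℝ (fun _ : ι => ℝ) 2)
    fun u hu => Function.ne_iff.1 (lp.eq_zero_iff_coeFn_eq_zero.not.1 (hW0 hu))
  obtain ⟨K, hK, hKM⟩ := exists_pos_forall_lt_tsum_div_sq hF_nonneg hsuper hc hM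
  exact ⟨K, hK, fun s hs u hu => hKM s hs u (hF_summable s u) (hcW u hu)⟩

/-- Proposition 3.2 (iii): `I(su)/s² → ∞` as `s → ∞`, uniformly on weakly compact
subsets of `H¹(V)\{0}`, where `I(u) = Σ_x F(x,u(x))`. -/
theorem stmt7
    {Vtx : Type*} (adj : Vtx → Vtx → Prop) (D : ℕ)
    (hsym : ∀ x y, adj x y → adj y x)
    (hirr : ∀ x, ¬ adj x x)
    (hfin : ∀ x, {y | adj x y}.Finite)
    (hdeg : ∀ x, {y | adj x y}.ncard ≤ D)
    (Vp : Vtx → ℝ) (C1 C2 : ℝ) (hC1 : 0 < C1)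
    (hVbd : ∀ x, C1 ≤ Vp x ∧ Vp x ≤ C2)
    (f : Vtx → ℝ → ℝ) (hcont : ∀ x, Continuous (f x))
    (a q : ℝ) (ha : 0 < a) (hq : 2 < q)
    (hgrowth : ∀ x t, |f x t| ≤ a * (|t| + |t| ^ (q - 1)))
    (hsmall : ∀ ε > 0, ∃ δ > 0, ∀ x t, t ≠ 0 → |t| < δ → |f x t| ≤ ε * |t|)
    (hmono : ∀ x, StrictMonoOn (fun t => f x t / |t|) (Set.Iio 0) ∧
             StrictMonoOn (fun t => f x t / |t|) (Set.Ioi 0))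
    (F : Vtx → ℝ → ℝ) (hF : ∀ x t, F x t = ∫ s in (0:ℝ)..t, f x s)
    (hsuper : ∀ M : ℝ, ∃ R > 0, ∀ x t, R ≤ |t| → M ≤ F x t / t ^ 2)
    :
    ∀ W : Set (H1 Vtx), W ⊆ {u | u ≠ 0} →
      IsCompact ((toWeakSpace ℝ (H1 Vtx)) '' W) →
      ∀ M > 0, ∃ K > 0, ∀ s : ℝ, K < s → ∀ u ∈ W,
        M < (∑' x, F x (s * u x)) / s ^ 2 := fun W hW0 hW M hM =>
  stmt7_general f hsmall (fun x => ⟨(hmono x).1.monotoneOn, (hmono x).2.monotoneOn⟩) F hF hsuper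
    W hW0 hW M hM
end

section
/- In the Nehari setting, for w ∈ H¹(V)\{0} let α_w(s) = Φ(sw) for s ∈ (0,∞), so that α_w'(s) = s‖w‖² − I'(sw)w. Then there exists a unique s_w > 0 such that α_w'(s) > 0 for 0 < s < s_w and α_w'(s) < 0 for s > s_w; in particular s_w w is the unique point of the ray {sw : s > 0} lying on the Nehari manifold N = {u ∈ H¹\{0} : Φ'(u)u = 0}. -/
open scoped ENNReal

/-
Dividing by `s > 0` turns `α_w'(s)` into `‖w‖² - I'(sw)w/s`, and the second term is the sum over
the vertices of `f(x, s w(x)) w(x) / s`. By (f2) each of these ray quotients increases with `s`,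
strictly where `w(x) ≠ 0`. It tends to `0` as `s → 0` by (f1), and to `∞` as `s → ∞` where
`w(x) ≠ 0` by (f3), since `F(x,t) ≤ f(x,t) t`. Monotonicity makes the value at one `s` a summable
majorant for all smaller ones, so continuity and the limit at `0` pass to the sum, which therefore
takes the value `‖w‖²` exactly once.

The Nehari condition involves the Fréchet derivative of `Φ`. Its quadratic part is the form of the
bounded symmetric operator `½∇*∇ + V`. An `ℓ²` function `u` tends to zero at infinity, so in
differentiating `Σ_x F(x,u(x))` only finitely many vertices lie outside the range where (f1)
controls `f`, and there continuity suffices.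
-/

open Set Filter Topology Bornology
open scoped InnerProductSpace InnerProduct NNReal

section LpSpace

variable {ι κ E : Type*} [NormedAddCommGroup E] {p : ℝ≥0∞} {φ : κ → ι} {D : ℕ}

theorem sum_norm_rpow_comp_le (hp : 0 < p.toReal) (hφ : ∀ i, (φ ⁻¹' {i}).encard ≤ D)
    (u : lp (fun _ : ι => E) p) (s : Finset κ) :
    ∑ k ∈ s, ‖u (φ k)‖ ^ p.toReal ≤ D * ‖u‖ ^ p.toReal := by
  classical
  have hcard (i : ι) : (s.filter (φ · = i)).card ≤ D := by
    have hsub : (↑(s.filter (φ · = i)) : Set κ) ⊆ φ ⁻¹' {i} :=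
      fun _ hk => (Finset.mem_filter.1 hk).2
    exact_mod_cast (Set.encard_coe_eq_coe_finsetCard _).symm.trans_le
      ((Set.encard_le_encard hsub).trans (hφ i))
  calc ∑ k ∈ s, ‖u (φ k)‖ ^ p.toReal
      = ∑ i ∈ s.image φ, (s.filter (φ · = i)).card • ‖u i‖ ^ p.toReal :=
        Finset.sum_comp (fun i => ‖u i‖ ^ p.toReal) φ
    _ ≤ ∑ i ∈ s.image φ, D * ‖u i‖ ^ p.toReal := by
        gcongr with i
        rw [nsmul_eq_mul]
        gcongr
        exact hcard i
    _ = D * ∑ i ∈ s.image φ, ‖u i‖ ^ p.toReal := (Finset.mul_sum ..).symm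
    _ ≤ D * ‖u‖ ^ p.toReal := by gcongr; exact lp.sum_rpow_le_norm_rpow hp u _

/-- Composition `u ↦ u ∘ φ` with a map whose fibres have at most `D` elements, as a bounded
operator between `ℓᵖ` spaces. -/
noncomputable def lpCompCLM (𝕜 : Type*) [NontriviallyNormedField 𝕜] [NormedSpace 𝕜 E]
    [Fact (1 ≤ p)] (hp : p ≠ ∞) (hφ : ∀ i, (φ ⁻¹' {i}).encard ≤ D) :
    lp (fun _ : ι => E) p →L[𝕜] lp (fun _ : κ => E) p :=
  have hp' : 0 < p.toReal := ENNReal.toReal_pos (one_pos.trans_le Fact.out).ne' hp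
  LinearMap.mkContinuous
    { toFun := fun u => ⟨fun k => u (φ k), memℓp_gen' (sum_norm_rpow_comp_le hp' hφ u)⟩
      map_add' := fun _ _ => rfl
      map_smul' := fun _ _ => rfl }
    ((D : ℝ) ^ p.toReal⁻¹) fun u =>
      lp.norm_le_of_forall_sum_le hp' (by positivity) fun s => by
        rw [Real.mul_rpow (by positivity) (norm_nonneg u),
          Real.rpow_inv_rpow D.cast_nonneg hp'.ne']
        exact sum_norm_rpow_comp_le hp' hφ u s

theorem tendsto_cofinite_zero_of_memℓp {u : ι → E} (hp : 0 < p.toReal) (hu : Memℓp u p) :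
    Tendsto u cofinite (𝓝 0) := by
  have h := (hu.summable hp).tendsto_cofinite_zero.rpow_const (Or.inr (inv_nonneg.2 hp.le))
  rw [Real.zero_rpow (inv_ne_zero hp.ne')] at h
  refine tendsto_zero_iff_norm_tendsto_zero.2 (h.congr fun i => ?_)
  exact Real.rpow_rpow_inv (norm_nonneg _) hp.ne'

theorem exists_apply_ne_zero {u : lp (fun _ : ι => E) p} (hu : u ≠ 0) : ∃ i, u i ≠ 0 := by
  by_contra! h
  exact hu (lp.ext (funext h))

theorem eventually_forall_lp_apply [Fact (1 ≤ p)] {P : ι → E → Prop}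
    (h : ∀ᶠ t in 𝓝 (0 : E), ∀ i, P i t) :
    ∀ᶠ v : lp (fun _ : ι => E) p in 𝓝 0, ∀ i, P i (v i) := by
  obtain ⟨δ, hδ, hP⟩ := Metric.eventually_nhds_iff.1 h
  filter_upwards [Metric.ball_mem_nhds 0 hδ] with v hv i
  refine hP ?_ i
  rw [dist_zero_right]
  have hp : p ≠ 0 := (one_pos.trans_le Fact.out).ne'
  exact (lp.norm_apply_le_norm hp v i).trans_lt (mem_ball_zero_iff.1 hv)

end LpSpace

section Energy

variable {Vtx : Type*} {adj : Vtx → Vtx → Prop} {D : ℕ} {Vp : Vtx → ℝ} {C : ℝ≥0}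

theorem encard_fiber_fst_le (hdeg : ∀ x, {y | adj x y}.encard ≤ D) (x : Vtx) :
    ((fun e : Σ x, {y // adj x y} => e.1) ⁻¹' {x}).encard ≤ D := by
  refine (Set.encard_le_encard_of_injOn (f := fun e => e.2.1) ?_ ?_).trans (hdeg x)
  · rintro ⟨_, y, h⟩ rfl
    exact h
  · rintro ⟨_, y, h⟩ rfl ⟨_, y', h'⟩ rfl (rfl : y = y')
    rfl

theorem encard_fiber_snd_le (hsym : ∀ x y, adj x y → adj y x)
    (hdeg : ∀ x, {y | adj x y}.encard ≤ D) (y : Vtx) :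
    ((fun e : Σ x, {y // adj x y} => e.2.1) ⁻¹' {y}).encard ≤ D := by
  refine (Set.encard_le_encard_of_injOn (f := fun e => e.1) ?_ ?_).trans (hdeg y)
  · rintro ⟨x, _, h⟩ rfl
    exact hsym _ _ h
  · rintro ⟨x, _, h⟩ rfl ⟨x', y', h'⟩ (rfl : y' = _) (rfl : x = x')
    rfl

/-- The discrete gradient `(∇u)(x,y) = u(y) - u(x)`, as a bounded operator from `ℓ²` of the
vertices to `ℓ²` of the oriented edges. -/
noncomputable def gradCLM (hsym : ∀ x y, adj x y → adj y x)
    (hdeg : ∀ x, {y | adj x y}.encard ≤ D) :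
    H1 Vtx →L[ℝ] lp (fun _ : Σ x, {y // adj x y} => ℝ) 2 :=
  lpCompCLM (p := 2) ℝ ENNReal.ofNat_ne_top (encard_fiber_snd_le hsym hdeg) -
    lpCompCLM (p := 2) ℝ ENNReal.ofNat_ne_top (encard_fiber_fst_le hdeg)

theorem hasSum_gammaProd (hsym : ∀ x y, adj x y → adj y x)
    (hdeg : ∀ x, {y | adj x y}.encard ≤ D) (u v : H1 Vtx) :
    HasSum (gammaProd adj u v) (1 / 2 * ⟪gradCLM hsym hdeg u, gradCLM hsym hdeg v⟫_ℝ) := by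
  have h : HasSum (fun e : Σ x, {y // adj x y} => (u e.2.1 - u e.1) * (v e.2.1 - v e.1))
      ⟪gradCLM hsym hdeg u, gradCLM hsym hdeg v⟫_ℝ :=
    (lp.hasSum_inner _ _).congr_fun fun e => mul_comm (u e.2.1 - u e.1) _
  exact (h.sigma fun x => (h.summable.sigma_factor x).hasSum).mul_left _

/-- Multiplication by a bounded potential, as a bounded operator on `ℓ²`. -/
noncomputable def potentialCLM (hV : ∀ x, |Vp x| ≤ C) : H1 Vtx →L[ℝ] H1 Vtx :=
  lp.mapCLM 2 (fun x => Vp x • ContinuousLinearMap.id ℝ ℝ) C.2 fun x => by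
    simpa [norm_smul] using hV x

/-- The Schrödinger operator `-Δ + V` in the form `½∇*∇ + V`; the factor `½` is there because each
edge is counted in both orientations. -/
noncomputable def schrodingerCLM (hsym : ∀ x y, adj x y → adj y x)
    (hdeg : ∀ x, {y | adj x y}.encard ≤ D) (hV : ∀ x, |Vp x| ≤ C) : H1 Vtx →L[ℝ] H1 Vtx :=
  (1 / 2 : ℝ) • ((gradCLM hsym hdeg)† ∘L gradCLM hsym hdeg) + potentialCLM hV

theorem isSymmetric_schrodingerCLM (hsym : ∀ x y, adj x y → adj y x)
    (hdeg : ∀ x, {y | adj x y}.encard ≤ D) (hV : ∀ x, |Vp x| ≤ C) :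
    (schrodingerCLM hsym hdeg hV : H1 Vtx →ₗ[ℝ] H1 Vtx).IsSymmetric := by
  have hpot : (potentialCLM hV : H1 Vtx →ₗ[ℝ] H1 Vtx).IsSymmetric := fun u v => by
    refine tsum_congr fun x => ?_
    change v x * (Vp x * u x) = Vp x * v x * u x
    ring
  have hgrad := (gradCLM hsym hdeg).isPositive_adjoint_comp_self.isSymmetric
  exact (hgrad.smul (by simp)).add hpot

theorem hasSum_schrodingerCLM (hsym : ∀ x y, adj x y → adj y x)
    (hdeg : ∀ x, {y | adj x y}.encard ≤ D) (hV : ∀ x, |Vp x| ≤ C) (u : H1 Vtx) :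
    HasSum (fun x => gradSq adj u x + Vp x * u x ^ 2) ⟪schrodingerCLM hsym hdeg hV u, u⟫_ℝ := by
  have hpot : HasSum (fun x => Vp x * u x ^ 2) ⟪potentialCLM hV u, u⟫_ℝ := by
    refine (lp.hasSum_inner _ _).congr_fun fun x => ?_
    change Vp x * u x ^ 2 = u x * (Vp x * u x)
    ring
  have hsplit : ⟪schrodingerCLM hsym hdeg hV u, u⟫_ℝ =
      1 / 2 * ⟪gradCLM hsym hdeg u, gradCLM hsym hdeg u⟫_ℝ + ⟪potentialCLM hV u, u⟫_ℝ := by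
    simp [schrodingerCLM, inner_add_left, inner_smul_left,
      ContinuousLinearMap.adjoint_inner_left]
  exact hsplit ▸ (hasSum_gammaProd hsym hdeg u u).add hpot

theorem nrmH_sq_eq_inner (hsym : ∀ x y, adj x y → adj y x)
    (hdeg : ∀ x, {y | adj x y}.encard ≤ D) (hV : ∀ x, |Vp x| ≤ C) {u : H1 Vtx}
    (hu : 0 < nrmH adj Vp u) : nrmH adj Vp u ^ 2 = ⟪schrodingerCLM hsym hdeg hV u, u⟫_ℝ :=
  (Real.sq_sqrt (Real.sqrt_pos.1 hu).le).trans (hasSum_schrodingerCLM hsym hdeg hV u).tsum_eq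

theorem ne_zero_of_nrmH_pos {u : H1 Vtx} (hu : 0 < nrmH adj Vp u) : u ≠ 0 := by
  rintro rfl
  simp [nrmH, nrmV, gradSq, gammaProd] at hu

theorem nrmH_pos (hsym : ∀ x y, adj x y → adj y x) (hdeg : ∀ x, {y | adj x y}.encard ≤ D)
    (hV : ∀ x, |Vp x| ≤ C) (hpos : ∀ x, 0 < Vp x) {u : H1 Vtx} (hu : u ≠ 0) :
    0 < nrmH adj Vp u := by
  obtain ⟨x, hx⟩ := exists_apply_ne_zero hu
  have hgrad (y : Vtx) : 0 ≤ gradSq adj u y :=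
    mul_nonneg one_half_pos.le (tsum_nonneg fun _ => mul_self_nonneg _)
  refine Real.sqrt_pos.2 ((hasSum_schrodingerCLM hsym hdeg hV u).summable.tsum_pos
    (fun y => add_nonneg (hgrad y) (mul_nonneg (hpos y).le (sq_nonneg _))) x ?_)
  have := hpos x
  have := hgrad x
  positivity

end Energy

section Superposition

variable {ι : Type*} {f F : ι → ℝ → ℝ}

/-- Condition (f1): `f(x,t) = o(t)` as `t → 0`, uniformly in `x`. -/
def SuperlinearAtZero (f : ι → ℝ → ℝ) : Prop :=
  ∀ ε > 0, ∀ᶠ t in 𝓝 0, ∀ x, |f x t| ≤ ε * |t|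

namespace SuperlinearAtZero

theorem isLittleO (hf : SuperlinearAtZero f) (x : ι) : f x =o[𝓝 0] (id : ℝ → ℝ) :=
  Asymptotics.isLittleO_iff.2 fun _ε hε => (hf _ hε).mono fun _t ht => ht x

theorem apply_zero (hf : SuperlinearAtZero f) (x : ι) : f x 0 = 0 :=
  abs_nonpos_iff.1 (by simpa using (hf 1 one_pos).self_of_nhds x)

theorem of_punctured (hcont : ∀ x, Continuous (f x))
    (hf : ∀ ε > 0, ∃ δ > 0, ∀ x t, t ≠ 0 → |t| < δ → |f x t| ≤ ε * |t|) :
    SuperlinearAtZero f := by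
  intro ε hε
  obtain ⟨δ, hδ, h⟩ := hf ε hε
  filter_upwards [Metric.ball_mem_nhds 0 hδ] with t ht x
  have hne : ∀ s ∈ Metric.ball 0 δ ∩ {0}ᶜ, |f x s| ≤ ε * |s| := fun s hs =>
    h x s hs.2 (mem_ball_zero_iff.1 hs.1)
  have hcl : t ∈ closure (Metric.ball 0 δ ∩ {0}ᶜ) :=
    (dense_compl_singleton 0).open_subset_closure_inter Metric.isOpen_ball ht
  exact closure_minimal hne (isClosed_le ((hcont x).abs) (by fun_prop)) hcl

theorem memℓp {p : ℝ≥0∞} (hf : SuperlinearAtZero f) (hp : 0 < p.toReal) {u : ι → ℝ}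
    (hu : Memℓp u p) : Memℓp (fun x => f x (u x)) p := by
  refine memℓp_gen ((hu.summable hp).of_norm_bounded_eventually ?_)
  filter_upwards [(tendsto_cofinite_zero_of_memℓp hp hu).eventually (hf 1 one_pos)] with x hx
  rw [Real.norm_of_nonneg (by positivity)]
  gcongr
  simpa using hx x

theorem eventually_nhds_zero_abs_sub_le (hf : SuperlinearAtZero f) {ε : ℝ} (hε : 0 < ε) :
    ∀ᶠ p : ℝ × ℝ in 𝓝 0 ×ˢ 𝓝 0, ∀ x, |f x (p.1 + p.2) - f x p.1| ≤ ε * (|p.1| + |p.2|) := by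
  have hsmall := hf (ε / 2) (half_pos hε)
  have hadd : Tendsto (fun p : ℝ × ℝ => p.1 + p.2) (𝓝 0 ×ˢ 𝓝 0) (𝓝 0) := by
    simpa using (tendsto_fst (f := 𝓝 (0 : ℝ)) (g := 𝓝 (0 : ℝ))).add tendsto_snd
  filter_upwards [hadd.eventually hsmall, tendsto_fst.eventually hsmall] with p hsum hfst x
  calc |f x (p.1 + p.2) - f x p.1| ≤ |f x (p.1 + p.2)| + |f x p.1| := abs_sub _ _
    _ ≤ ε / 2 * |p.1 + p.2| + ε / 2 * |p.1| := add_le_add (hsum x) (hfst x)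
    _ ≤ ε / 2 * (|p.1| + |p.2|) + ε / 2 * (|p.1| + |p.2|) := by
      gcongr
      · exact abs_add_le _ _
      · exact le_add_of_nonneg_right (abs_nonneg _)
    _ = ε * (|p.1| + |p.2|) := by ring

theorem eventually_abs_sub_le_at (hf : SuperlinearAtZero f) {x : ι} (hcont : Continuous (f x))
    (a : ℝ) {ε : ℝ} (hε : 0 < ε) :
    ∀ᶠ h in 𝓝 0, |f x (a + h) - f x a| ≤ ε * (|a| + |h|) := by
  rcases eq_or_ne a 0 with rfl | ha
  · simpa [hf.apply_zero] using (hf ε hε).mono fun h hh => hh x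
  · have hincr : Continuous fun h => |f x (a + h) - f x a| := by fun_prop
    have hlim : Tendsto (fun h => |f x (a + h) - f x a|) (𝓝 0) (𝓝 0) := by
      simpa using hincr.tendsto 0
    filter_upwards [hlim.eventually_le_const (show 0 < ε * |a| by positivity)] with h hh
    exact hh.trans (by gcongr; exact le_add_of_nonneg_right (abs_nonneg h))

theorem eventually_abs_sub_le (hf : SuperlinearAtZero f) (hcont : ∀ x, Continuous (f x))
    {u : ι → ℝ} (hu : Tendsto u cofinite (𝓝 0)) {ε : ℝ} (hε : 0 < ε) :
    ∀ᶠ h in 𝓝 0, ∀ x, |f x (u x + h) - f x (u x)| ≤ ε * (|u x| + |h|) := by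
  obtain ⟨small, hsmall, near, hnear, hf'⟩ :=
    eventually_prod_iff.1 (hf.eventually_nhds_zero_abs_sub_le hε)
  have hexc : {x | ¬ small (u x)}.Finite := hu.eventually hsmall
  filter_upwards [hnear, (eventually_all_finite hexc).2 fun x _ =>
    hf.eventually_abs_sub_le_at (hcont x) (u x) hε] with h hh hfin x
  by_cases hx : small (u x)
  · exact hf' hx hh x
  · exact hfin x hx

theorem eventually_abs_taylor_le (hf : SuperlinearAtZero f) (hcont : ∀ x, Continuous (f x))
    (hF : ∀ x t, HasDerivAt (F x) (f x t) t) {u : ι → ℝ} (hu : Tendsto u cofinite (𝓝 0))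
    {ε : ℝ} (hε : 0 < ε) :
    ∀ᶠ h in 𝓝 0, ∀ x,
      |F x (u x + h) - F x (u x) - f x (u x) * h| ≤ ε * (|u x| + |h|) * |h| := by
  obtain ⟨δ, hδ, hfδ⟩ :=
    Metric.eventually_nhds_iff_ball.1 (hf.eventually_abs_sub_le hcont hu hε)
  filter_upwards [Metric.ball_mem_nhds 0 hδ] with h hh x
  have hderiv (t : ℝ) : HasDerivAt (fun t => F x t - f x (u x) * t) (f x t - f x (u x)) t :=
    (hF x t).sub (by simpa using (hasDerivAt_id t).const_mul (f x (u x)))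
  have hbound (t : ℝ) (ht : t ∈ Metric.closedBall (u x) |h|) :
      ‖f x t - f x (u x)‖ ≤ ε * (|u x| + |h|) := by
    have hth : |t - u x| ≤ |h| := ht
    have := hfδ (t - u x) (mem_ball_zero_iff.2 (hth.trans_lt (mem_ball_zero_iff.1 hh))) x
    rw [add_sub_cancel] at this
    exact this.trans (by gcongr)
  have hmvt := (convex_closedBall (u x) |h|).norm_image_sub_le_of_norm_hasDerivWithin_le
    (fun t _ => (hderiv t).hasDerivWithinAt) hbound
    (Metric.mem_closedBall_self (abs_nonneg h)) (y := u x + h) (by simp)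
  rw [add_sub_cancel_left, Real.norm_eq_abs, Real.norm_eq_abs] at hmvt
  convert hmvt using 2
  ring

theorem summable_primitive (hf : SuperlinearAtZero f) (hcont : ∀ x, Continuous (f x))
    (hF : ∀ x t, HasDerivAt (F x) (f x t) t) (hF0 : ∀ x, F x 0 = 0) (u : H1 ι) :
    Summable fun x => F x (u x) := by
  have hu := tendsto_cofinite_zero_of_memℓp (by simp) (lp.memℓp u)
  have hquad := hf.eventually_abs_taylor_le hcont hF (u := 0) tendsto_const_nhds one_pos
  refine (lp.summable_inner u u).of_norm_bounded_eventually ?_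
  filter_upwards [hu.eventually hquad] with x hx
  simpa [hF0, hf.apply_zero, sq] using hx x

/-- The superposition operator `u ↦ f(·, u(·))` on `ℓ²`: the gradient of `u ↦ Σ_x F(x, u(x))`. -/
noncomputable def superposition (hf : SuperlinearAtZero f) (u : H1 ι) : H1 ι :=
  ⟨fun x => f x (u x), hf.memℓp (by simp) (lp.memℓp u)⟩

theorem hasFDerivAt_tsum_primitive (hf : SuperlinearAtZero f) (hcont : ∀ x, Continuous (f x))
    (hF : ∀ x t, HasDerivAt (F x) (f x t) t) (hF0 : ∀ x, F x 0 = 0) (u : H1 ι) :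
    HasFDerivAt (fun v : H1 ι => ∑' x, F x (v x)) (innerSL ℝ (hf.superposition u)) u := by
  rw [hasFDerivAt_iff_isLittleO_nhds_zero, Asymptotics.isLittleO_iff]
  intro c hc
  have hcu : 0 < c / (‖u‖ + 1) := by positivity
  have hu := tendsto_cofinite_zero_of_memℓp (by simp) (lp.memℓp u)
  filter_upwards [eventually_forall_lp_apply (hf.eventually_abs_taylor_le hcont hF hu hcu),
    Metric.ball_mem_nhds 0 one_pos] with v hv hv1
  have hsum (z : H1 ι) := (hf.summable_primitive hcont hF hF0 z).hasSum
  have hrem : HasSum (fun x => F x (u x + v x) - F x (u x) - f x (u x) * v x) _ :=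
    ((hsum (u + v)).sub (hsum u)).sub
      ((lp.hasSum_inner (hf.superposition u) v).congr_fun fun x => mul_comm _ _)
  have hholder (z : H1 ι) :=
    lp.tsum_mul_le_mul_norm (by simpa using Real.HolderConjugate.two_two) z v
  have hbound := (((hholder u).1.hasSum.add (hholder v).1.hasSum).mul_left (c / (‖u‖ + 1)))
  refine (hrem.norm_le_of_bounded hbound fun x => ?_).trans ?_
  · exact (hv x).trans_eq (by simp only [Real.norm_eq_abs]; ring)
  · calc c / (‖u‖ + 1) * (∑' x, ‖u x‖ * ‖v x‖ + ∑' x, ‖v x‖ * ‖v x‖)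
        ≤ c / (‖u‖ + 1) * (‖u‖ * ‖v‖ + 1 * ‖v‖) := by
          gcongr
          · exact (hholder u).2
          · exact (hholder v).2.trans (by gcongr; exact (mem_ball_zero_iff.1 hv1).le)
      _ = c * ‖v‖ := by field_simp

end SuperlinearAtZero

end Superposition

section MonotoneSeries

variable {ι : Type*} {k : ι → ℝ → ℝ}

theorem continuousOn_tsum_of_monotoneOn (hmono : ∀ x, MonotoneOn (k x) (Ioi 0))
    (hnonneg : ∀ x s, 0 < s → 0 ≤ k x s) (hsum : ∀ s, Summable fun x => k x s)
    (hcont : ∀ x, ContinuousOn (k x) (Ioi 0)) :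
    ContinuousOn (fun s => ∑' x, k x s) (Ioi 0) := by
  refine continuousOn_of_locally_continuousOn fun S _ => ⟨Iio (S + 1), isOpen_Iio, by simp, ?_⟩
  refine continuousOn_tsum (fun x => (hcont x).mono inter_subset_left) (hsum (S + 1)) ?_
  rintro x s ⟨hs, hsS⟩
  rw [Real.norm_of_nonneg (hnonneg x s hs)]
  exact hmono x hs (mem_Ioi.2 (hs.trans hsS)) hsS.le

theorem tendsto_tsum_zero_of_monotoneOn (hmono : ∀ x, MonotoneOn (k x) (Ioi 0))
    (hnonneg : ∀ x s, 0 < s → 0 ≤ k x s) (hsum : ∀ s, Summable fun x => k x s)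
    (hlim : ∀ x, Tendsto (k x) (𝓝[>] 0) (𝓝 0)) :
    Tendsto (fun s => ∑' x, k x s) (𝓝[>] 0) (𝓝 0) := by
  have hbound : ∀ᶠ s in 𝓝[>] 0, ∀ x, ‖k x s‖ ≤ k x 1 := by
    filter_upwards [Ioc_mem_nhdsGT one_pos] with s hs x
    rw [Real.norm_of_nonneg (hnonneg x s hs.1)]
    exact hmono x hs.1 (mem_Ioi.2 one_pos) hs.2
  simpa using tendsto_tsum_of_dominated_convergence (hsum 1) hlim hbound

theorem strictMonoOn_tsum_of_monotoneOn (hmono : ∀ x, MonotoneOn (k x) (Ioi 0))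
    (hsum : ∀ s, Summable fun x => k x s) {x : ι} (hx : StrictMonoOn (k x) (Ioi 0)) :
    StrictMonoOn (fun s => ∑' x, k x s) (Ioi 0) := fun _s hs _t ht hst =>
  Summable.tsum_lt_tsum (fun x => hmono x hs ht hst.le) (hx hs ht hst) (hsum _) (hsum _)

theorem tendsto_tsum_atTop (hnonneg : ∀ x s, 0 < s → 0 ≤ k x s)
    (hsum : ∀ s, Summable fun x => k x s) {x : ι} (hx : Tendsto (k x) atTop atTop) :
    Tendsto (fun s => ∑' x, k x s) atTop atTop := by
  refine tendsto_atTop_mono' _ ?_ hx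
  filter_upwards [eventually_gt_atTop 0] with s hs
  exact (hsum s).le_tsum x fun y _ => hnonneg y s hs

end MonotoneSeries

section RayQuotient

variable {g G : ℝ → ℝ} {t : ℝ}

/-- Condition (f2) for a single vertex: `t ↦ g(t)/|t|` is strictly increasing on each half-line. -/
def NehariMonotone (g : ℝ → ℝ) : Prop :=
  StrictMonoOn (fun t => g t / |t|) (Iio 0) ∧ StrictMonoOn (fun t => g t / |t|) (Ioi 0)

/-- The contribution `g(st)t/s` of a vertex with value `t` to `I'(sw)w/s`, as a function of `s`. -/
noncomputable def rayQuotient (g : ℝ → ℝ) (t s : ℝ) : ℝ :=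
  g (s * t) * t / s

@[simp]
theorem rayQuotient_zero (g : ℝ → ℝ) : rayQuotient g 0 = 0 := by
  ext s
  simp [rayQuotient]

theorem rayQuotient_eq (g : ℝ → ℝ) (t : ℝ) {s : ℝ} (hs : 0 < s) :
    rayQuotient g t s = g (s * t) / |s * t| * (|t| * t) := by
  rcases eq_or_ne t 0 with rfl | ht
  · simp
  · have := abs_pos.2 ht
    rw [rayQuotient, abs_mul, abs_of_pos hs]
    field_simp

theorem continuousOn_rayQuotient (hg : Continuous g) : ContinuousOn (rayQuotient g t) (Ioi 0) :=
  ContinuousOn.div (by fun_prop) continuousOn_id fun _s hs => (mem_Ioi.1 hs).ne'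

theorem tendsto_rayQuotient_zero (hg : g =o[𝓝 0] (id : ℝ → ℝ)) :
    Tendsto (rayQuotient g t) (𝓝[>] 0) (𝓝 0) := by
  have hst : Tendsto (fun s => s * t) (𝓝[>] 0) (𝓝 0) := by
    have : Continuous fun s => s * t := by fun_prop
    simpa using (this.tendsto 0).mono_left nhdsWithin_le_nhds
  have hlim := (hg.abs_right.tendsto_div_nhds_zero.comp hst).mul_const (|t| * t)
  rw [zero_mul] at hlim
  refine hlim.congr' ?_
  filter_upwards [self_mem_nhdsWithin] with s hs using (rayQuotient_eq g t hs).symm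

namespace NehariMonotone

theorem strictMonoOn_rayQuotient (hg : NehariMonotone g) (ht : t ≠ 0) :
    StrictMonoOn (rayQuotient g t) (Ioi 0) := by
  intro s (hs : 0 < s) s' (hs' : 0 < s') hss'
  rw [rayQuotient_eq g t hs, rayQuotient_eq g t hs']
  rcases ht.lt_or_gt with ht | ht
  · exact mul_lt_mul_of_neg_right
      (hg.1 (mul_neg_of_pos_of_neg hs' ht) (mul_neg_of_pos_of_neg hs ht)
        (mul_lt_mul_of_neg_right hss' ht))
      (mul_neg_of_pos_of_neg (abs_pos.2 ht.ne) ht)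
  · exact mul_lt_mul_of_pos_right
      (hg.2 (mul_pos hs ht) (mul_pos hs' ht) (mul_lt_mul_of_pos_right hss' ht))
      (mul_pos (abs_pos.2 ht.ne') ht)

theorem monotoneOn_rayQuotient (hg : NehariMonotone g) (t : ℝ) :
    MonotoneOn (rayQuotient g t) (Ioi 0) := by
  rcases eq_or_ne t 0 with rfl | ht
  · rw [rayQuotient_zero]
    exact monotoneOn_const
  · exact (hg.strictMonoOn_rayQuotient ht).monotoneOn

theorem rayQuotient_nonneg (hg : NehariMonotone g) (hg0 : g =o[𝓝 0] (id : ℝ → ℝ)) (t : ℝ)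
    {s : ℝ} (hs : 0 < s) : 0 ≤ rayQuotient g t s := by
  refine le_of_tendsto (tendsto_rayQuotient_zero (t := t) hg0) ?_
  filter_upwards [Ioc_mem_nhdsGT hs] with r hr
  exact hg.monotoneOn_rayQuotient t hr.1 hs hr.2

theorem primitive_le (hg : NehariMonotone g) (hg0 : g =o[𝓝 0] (id : ℝ → ℝ))
    (hG : ∀ t, HasDerivAt G (g t) t) (hG0 : G 0 = 0) (t : ℝ) : G t ≤ g t * t := by
  have hderiv (s : ℝ) : HasDerivAt (fun s => G (s * t)) (g (s * t) * t) s :=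
    (hG (s * t)).comp s (hasDerivAt_mul_const t)
  obtain ⟨s, ⟨hs0, hs1⟩, hs⟩ := exists_hasDerivAt_eq_slope _ _ one_pos
    (fun s _ => (hderiv s).continuousAt.continuousWithinAt) fun s _ => hderiv s
  have hslope : g (s * t) * t = G t := by simpa [hG0] using hs
  calc G t = s * rayQuotient g t s := by rw [← hslope, rayQuotient]; field_simp
    _ ≤ 1 * rayQuotient g t s :=
      mul_le_mul_of_nonneg_right hs1.le (hg.rayQuotient_nonneg hg0 t hs0)
    _ ≤ 1 * rayQuotient g t 1 := by
      gcongr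
      exact hg.monotoneOn_rayQuotient t hs0 (mem_Ioi.2 one_pos) hs1.le
    _ = g t * t := by simp [rayQuotient]

theorem tendsto_rayQuotient_atTop (hg : NehariMonotone g) (hg0 : g =o[𝓝 0] (id : ℝ → ℝ))
    (hG : ∀ t, HasDerivAt G (g t) t) (hG0 : G 0 = 0)
    (hsuper : Tendsto (fun t => G t / t ^ 2) (cobounded ℝ) atTop) (ht : t ≠ 0) :
    Tendsto (rayQuotient g t) atTop atTop := by
  have hst : Tendsto (fun s => s * t) atTop (cobounded ℝ) :=
    (tendsto_mul_right_cobounded ht).mono_left IsOrderBornology.atTop_le_cobounded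
  refine tendsto_atTop_mono' _ ?_
    ((hsuper.comp hst).atTop_mul_const (sq_pos_of_ne_zero ht))
  filter_upwards [eventually_gt_atTop 0] with s hs
  calc G (s * t) / (s * t) ^ 2 * t ^ 2
      ≤ g (s * t) * (s * t) / (s * t) ^ 2 * t ^ 2 := by
        gcongr
        exact hg.primitive_le hg0 hG hG0 _
    _ = rayQuotient g t s := by
        rw [rayQuotient]
        field_simp

end NehariMonotone

end RayQuotient

section FiberQuotient

variable {ι : Type*} {f : ι → ℝ → ℝ}

/-- The quotient `I'(sw)w/s`; it equals `‖w‖²` exactly when `α_w'(s) = 0`. -/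
noncomputable def fiberQuotient (f : ι → ℝ → ℝ) (w : ι → ℝ) (s : ℝ) : ℝ :=
  (∑' x, f x (s * w x) * w x) / s

theorem fiberQuotient_eq_tsum (f : ι → ℝ → ℝ) (w : ι → ℝ) :
    fiberQuotient f w = fun s => ∑' x, rayQuotient (f x) (w x) s :=
  funext fun _ => tsum_div_const.symm

theorem SuperlinearAtZero.summable_rayQuotient (hf : SuperlinearAtZero f) (w : H1 ι) (s : ℝ) :
    Summable fun x => rayQuotient (f x) (w x) s :=
  ((lp.summable_inner (𝕜 := ℝ) w (hf.superposition (s • w))).div_const s)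

theorem strictMonoOn_fiberQuotient (hf : SuperlinearAtZero f) (hmono : ∀ x, NehariMonotone (f x))
    {w : H1 ι} {x : ι} (hx : w x ≠ 0) : StrictMonoOn (fiberQuotient f w) (Ioi 0) := by
  rw [fiberQuotient_eq_tsum]
  exact strictMonoOn_tsum_of_monotoneOn (fun y => (hmono y).monotoneOn_rayQuotient (w y))
    (hf.summable_rayQuotient w) ((hmono x).strictMonoOn_rayQuotient hx)

theorem exists_fiberQuotient_eq (hf : SuperlinearAtZero f) (hcont : ∀ x, Continuous (f x))
    (hmono : ∀ x, NehariMonotone (f x)) {w : H1 ι} {x : ι}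
    (hx : Tendsto (rayQuotient (f x) (w x)) atTop atTop) {c : ℝ} (hc : 0 < c) :
    ∃ s, 0 < s ∧ fiberQuotient f w s = c := by
  have hmono' (y : ι) := (hmono y).monotoneOn_rayQuotient (w y)
  have hnonneg (y : ι) (s : ℝ) (hs : 0 < s) :=
    (hmono y).rayQuotient_nonneg (hf.isLittleO y) (w y) hs
  have hsum := hf.summable_rayQuotient w
  rw [fiberQuotient_eq_tsum]
  exact isPreconnected_Ioi.intermediate_value_Ioi (l₁ := 𝓝[>] 0)
    inf_le_right (le_principal_iff.2 (Ioi_mem_atTop 0))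
    (continuousOn_tsum_of_monotoneOn hmono' hnonneg hsum fun y =>
      continuousOn_rayQuotient (hcont y))
    (tendsto_tsum_zero_of_monotoneOn hmono' hnonneg hsum fun y =>
      tendsto_rayQuotient_zero (hf.isLittleO y))
    (tendsto_tsum_atTop hnonneg hsum hx) hc

theorem tendsto_div_sq_cobounded {F : ι → ℝ → ℝ}
    (hF : ∀ M : ℝ, ∃ R > 0, ∀ x t, R ≤ |t| → M ≤ F x t / t ^ 2) (x : ι) :
    Tendsto (fun t => F x t / t ^ 2) (cobounded ℝ) atTop := by
  refine tendsto_atTop.2 fun M => ?_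
  obtain ⟨R, -, hR⟩ := hF M
  filter_upwards [tendsto_norm_cobounded_atTop.eventually_ge_atTop R] with t ht using hR x t ht

end FiberQuotient

section Nehari

variable {Vtx : Type*} {adj : Vtx → Vtx → Prop} {D : ℕ} {Vp : Vtx → ℝ} {C : ℝ≥0}
  {f F : Vtx → ℝ → ℝ}

theorem hasFDerivAt_PhiF (hsym : ∀ x y, adj x y → adj y x)
    (hdeg : ∀ x, {y | adj x y}.encard ≤ D) (hV : ∀ x, |Vp x| ≤ C) (hf : SuperlinearAtZero f)
    (hcont : ∀ x, Continuous (f x)) (hF : ∀ x t, HasDerivAt (F x) (f x t) t)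
    (hF0 : ∀ x, F x 0 = 0) (u : H1 Vtx) :
    HasFDerivAt (PhiF adj Vp F)
      (innerSL ℝ (schrodingerCLM hsym hdeg hV u - hf.superposition u)) u := by
  have hquad := ((isSymmetric_schrodingerCLM hsym hdeg hV).hasStrictFDerivAt_reApplyInnerSelf
    u).hasFDerivAt.const_mul (1 / 2)
  have hdiff := hquad.sub (hf.hasFDerivAt_tsum_primitive hcont hF hF0 u)
  have hfun : PhiF adj Vp F = fun v => 1 / 2 * (schrodingerCLM hsym hdeg hV).reApplyInnerSelf v -
      ∑' x, F x (v x) := funext fun v =>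
    congrArg (1 / 2 * · - _) (hasSum_schrodingerCLM hsym hdeg hV v).tsum_eq
  have hgrad : innerSL ℝ (schrodingerCLM hsym hdeg hV u - hf.superposition u) =
      (1 / 2 : ℝ) • 2 • innerSL ℝ (schrodingerCLM hsym hdeg hV u) -
        innerSL ℝ (hf.superposition u) := by
    rw [map_sub]
    module
  rw [hfun, hgrad]
  exact hdiff

theorem smul_mem_Nehari_iff (hsym : ∀ x y, adj x y → adj y x)
    (hdeg : ∀ x, {y | adj x y}.encard ≤ D) (hV : ∀ x, |Vp x| ≤ C) (hf : SuperlinearAtZero f)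
    (hcont : ∀ x, Continuous (f x)) (hF : ∀ x t, HasDerivAt (F x) (f x t) t)
    (hF0 : ∀ x, F x 0 = 0) {w : H1 Vtx} (hw : 0 < nrmH adj Vp w) {s : ℝ} (hs : 0 < s) :
    s • w ∈ Nehari adj Vp F ↔ fiberQuotient f w s = nrmH adj Vp w ^ 2 := by
  have hw0 : w ≠ 0 := ne_zero_of_nrmH_pos hw
  have hI : ⟪hf.superposition (s • w), w⟫_ℝ = s * fiberQuotient f w s := by
    rw [fiberQuotient, mul_div_cancel₀ _ hs.ne']
    exact tsum_congr fun x => mul_comm (w x) _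
  have hderiv : fderiv ℝ (PhiF adj Vp F) (s • w) (s • w) =
      s ^ 2 * (nrmH adj Vp w ^ 2 - fiberQuotient f w s) := by
    rw [(hasFDerivAt_PhiF hsym hdeg hV hf hcont hF hF0 (s • w)).fderiv,
      nrmH_sq_eq_inner hsym hdeg hV hw]
    simp only [innerSL_apply_apply, map_smul, inner_sub_left, real_inner_smul_left, hI]
    ring
  simp [Nehari, hderiv, hs.ne', hw0, sub_eq_zero, eq_comm]

end Nehari

-- As `√` vanishes on negative reals, `0 < nrmH adj Vp w` says that the quadratic form is positive
-- at `w`.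
theorem stmt8_general {Vtx : Type*} {adj : Vtx → Vtx → Prop} {D : ℕ}
    (hsym : ∀ x y, adj x y → adj y x) (hdeg : ∀ x, {y | adj x y}.encard ≤ D)
    {Vp : Vtx → ℝ} {C : ℝ≥0} (hV : ∀ x, |Vp x| ≤ C)
    {f : Vtx → ℝ → ℝ} (hcont : ∀ x, Continuous (f x)) (hf : SuperlinearAtZero f)
    (hmono : ∀ x, NehariMonotone (f x))
    {F : Vtx → ℝ → ℝ} (hF : ∀ x t, F x t = ∫ s in (0 : ℝ)..t, f x s)
    (hsuper : ∀ x, Tendsto (fun t => F x t / t ^ 2) (cobounded ℝ) atTop)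
    {w : H1 Vtx} (hw : 0 < nrmH adj Vp w) :
    ∃! s_w : ℝ, 0 < s_w ∧
      (∀ s : ℝ, 0 < s → s < s_w →
        0 < s * nrmH adj Vp w ^ 2 - ∑' x, f x (s * w x) * w x) ∧
      (∀ s : ℝ, s_w < s → s * nrmH adj Vp w ^ 2 - ∑' x, f x (s * w x) * w x < 0) ∧
      (∀ s : ℝ, 0 < s → (s • w ∈ Nehari adj Vp F ↔ s = s_w)) := by
  have hF0 (x : Vtx) : F x 0 = 0 := by simp [hF]
  have hF' (x : Vtx) (t : ℝ) : HasDerivAt (F x) (f x t) t := by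
    simpa only [← funext (hF x)] using ((hcont x).integral_hasStrictDerivAt 0 t).hasDerivAt
  obtain ⟨x, hx⟩ := exists_apply_ne_zero (ne_zero_of_nrmH_pos hw)
  have hstrict := strictMonoOn_fiberQuotient hf hmono hx
  obtain ⟨s_w, hs_w, heq⟩ := exists_fiberQuotient_eq hf hcont hmono
    ((hmono x).tendsto_rayQuotient_atTop (hf.isLittleO x) (hF' x) (hF0 x) (hsuper x) hx)
    (sq_pos_of_pos hw)
  have hfactor {s : ℝ} (hs : 0 < s) : s * nrmH adj Vp w ^ 2 - ∑' x, f x (s * w x) * w x =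
      s * (fiberQuotient f w s_w - fiberQuotient f w s) := by
    rw [heq, fiberQuotient]
    field_simp
  have hNehari {s : ℝ} (hs : 0 < s) : s • w ∈ Nehari adj Vp F ↔ s = s_w := by
    rw [smul_mem_Nehari_iff hsym hdeg hV hf hcont hF' hF0 hw hs, ← heq]
    exact hstrict.injOn.eq_iff hs hs_w
  refine ⟨s_w, ⟨hs_w, fun s hs hlt => ?_, fun s hlt => ?_, fun s => hNehari⟩,
    fun s hs => (hNehari hs.1).1 ((hs.2.2.2 s hs.1).2 rfl)⟩
  · rw [hfactor hs]
    exact mul_pos hs (sub_pos.2 (hstrict hs hs_w hlt))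
  · have hs := hs_w.trans hlt
    rw [hfactor hs]
    exact mul_neg_of_pos_of_neg hs (sub_neg.2 (hstrict hs_w hs hlt))

/-- Proposition 3.3 (i): for `w ≠ 0` and `α_w(s) = Φ(sw)`, with
`α_w'(s) = s‖w‖² − I'(sw)w`, there is a unique `s_w > 0` with `α_w' > 0` on `(0,s_w)` and
`α_w' < 0` on `(s_w,∞)`; `s_w w` is the unique point of the ray `{sw : s>0}` on the
Nehari manifold. -/
theorem stmt8
    {Vtx : Type*} (adj : Vtx → Vtx → Prop) (D : ℕ)
    (hsym : ∀ x y, adj x y → adj y x)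
    (hirr : ∀ x, ¬ adj x x)
    (hfin : ∀ x, {y | adj x y}.Finite)
    (hdeg : ∀ x, {y | adj x y}.ncard ≤ D)
    (Vp : Vtx → ℝ) (C1 C2 : ℝ) (hC1 : 0 < C1)
    (hVbd : ∀ x, C1 ≤ Vp x ∧ Vp x ≤ C2)
    (f : Vtx → ℝ → ℝ) (hcont : ∀ x, Continuous (f x))
    (a q : ℝ) (ha : 0 < a) (hq : 2 < q)
    (hgrowth : ∀ x t, |f x t| ≤ a * (|t| + |t| ^ (q - 1)))
    (hsmall : ∀ ε > 0, ∃ δ > 0, ∀ x t, t ≠ 0 → |t| < δ → |f x t| ≤ ε * |t|)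
    (hmono : ∀ x, StrictMonoOn (fun t => f x t / |t|) (Set.Iio 0) ∧
             StrictMonoOn (fun t => f x t / |t|) (Set.Ioi 0))
    (F : Vtx → ℝ → ℝ) (hF : ∀ x t, F x t = ∫ s in (0:ℝ)..t, f x s)
    (hsuper : ∀ M : ℝ, ∃ R > 0, ∀ x t, R ≤ |t| → M ≤ F x t / t ^ 2)
    :
    ∀ w : H1 Vtx, w ≠ 0 →
      ∃! s_w : ℝ, 0 < s_w ∧
        (∀ s : ℝ, 0 < s → s < s_w →
          0 < s * (nrmH adj Vp w) ^ 2 - ∑' x, f x (s * w x) * w x) ∧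
        (∀ s : ℝ, s_w < s →
          s * (nrmH adj Vp w) ^ 2 - ∑' x, f x (s * w x) * w x < 0) ∧
        (∀ s : ℝ, 0 < s → (s • w ∈ Nehari adj Vp F ↔ s = s_w)) := by
  have hdeg' (x : Vtx) : {y | adj x y}.encard ≤ D :=
    encard_le_coe_iff_finite_ncard_le.2 ⟨hfin x, hdeg x⟩
  have hpos (x : Vtx) : 0 < Vp x := hC1.trans_le (hVbd x).1
  have hV (x : Vtx) : |Vp x| ≤ C2.toNNReal :=
    (abs_of_pos (hpos x)).trans_le ((hVbd x).2.trans (Real.le_coe_toNNReal C2))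
  exact fun w hw => stmt8_general hsym hdeg' hV hcont (.of_punctured hcont hsmall) hmono hF
    (tendsto_div_sq_cobounded hsuper) (nrmH_pos hsym hdeg' hV hpos hw)
end

section
/- In the Nehari setting, for each w ∈ H¹(V)\{0} let s_w > 0 be the unique value with Φ'(s_w w)(s_w w) = 0 (the unique maximizer of s ↦ Φ(sw) on (0,∞)). Then there exists δ > 0 such that s_w ≥ δ for all w in the unit sphere S = {w ∈ H¹(V) : ‖w‖ = 1}. -/
open scoped ENNReal

/-!
On the Nehari manifold `‖u‖² = Σ f(x, u(x)) u(x)`. Since `f(x, t) = o(t)` uniformly in `x`, the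
right-hand side is at most `(C₁ / 2) ‖u‖²_{ℓ²}` when `‖u‖_{ℓ²}` is small, while the left-hand side
is at least `C₁ ‖u‖²_{ℓ²}`; so the manifold stays away from the origin. For `‖w‖ = 1` and `s > 0`
the point `s w` has norm `s`, hence a lower bound for the norm on the manifold bounds `s_w`.

The identity needs `Φ` to be Fréchet differentiable. The quadratic part is a sum of squared norms of
bounded operators. For the nonlinear part, the mean value theorem in each coordinate turns the
remainder into `⟨N(u + k) - N(u), h⟩` with `‖k‖ ≤ ‖h‖`, where `N(u) = f(·, u(·))`, so
differentiability reduces to continuity of `N` on `ℓ²`.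
-/

open Filter Topology

section LpSpace

variable {I J E : Type*} [NormedAddCommGroup E] {p : ℝ≥0∞}

lemma lp_hasSum_norm_sq {G : I → Type*} [∀ i, NormedAddCommGroup (G i)] (u : lp G 2) :
    HasSum (fun i ↦ ‖u i‖ ^ 2) (‖u‖ ^ 2) := by
  simpa using lp.hasSum_norm (by simp) u

lemma lp_norm_le_mul_norm {G H : I → Type*} [∀ i, NormedAddCommGroup (G i)]
    [∀ i, NormedAddCommGroup (H i)] [Fact (1 ≤ p)] {u : lp G p} {v : lp H p} {c : ℝ} (hc : 0 ≤ c)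
    (h : ∀ i, ‖v i‖ ≤ c * ‖u i‖) : ‖v‖ ≤ c * ‖u‖ := by
  have hp : p ≠ 0 := (zero_lt_one.trans_le Fact.out).ne'
  calc ‖v‖ ≤ ‖c • lp.toNorm u‖ := lp.norm_mono hp fun i ↦ by simpa [abs_of_nonneg hc] using h i
    _ = c * ‖u‖ := by rw [norm_smul, lp.norm_toNorm, Real.norm_of_nonneg hc]

lemma lp_tendsto_cofinite_zero (hp : 0 < p.toReal) (u : lp (fun _ : I ↦ E) p) :
    Tendsto u cofinite (𝓝 0) := by
  rw [tendsto_zero_iff_norm_tendsto_zero]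
  have h := ((lp.memℓp u).summable hp).tendsto_cofinite_zero.rpow_const
    (Or.inr (inv_nonneg.2 hp.le))
  simpa [Real.rpow_rpow_inv (norm_nonneg _) hp.ne', Real.zero_rpow (inv_ne_zero hp.ne')] using h

lemma sum_comp_le_mul_sum_image [DecidableEq J] {φ : I → J} {D : ℕ}
    (hφ : ∀ j, (φ ⁻¹' {j}).encard ≤ D) {g : J → ℝ} (hg : ∀ j, 0 ≤ g j) (s : Finset I) :
    ∑ i ∈ s, g (φ i) ≤ D * ∑ j ∈ s.image φ, g j := by
  rw [Finset.sum_comp, Finset.mul_sum]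
  refine Finset.sum_le_sum fun j _ ↦ ?_
  have hcard : (Finset.card {i ∈ s | φ i = j} : ℕ∞) ≤ D := by
    rw [← Set.encard_coe_eq_coe_finsetCard]
    exact (Set.encard_le_encard fun i hi ↦ by simp_all).trans (hφ j)
  rw [nsmul_eq_mul]
  exact mul_le_mul_of_nonneg_right (by exact_mod_cast hcard) (hg j)

lemma lp_sum_norm_comp_rpow_le {φ : I → J} {D : ℕ} (hφ : ∀ j, (φ ⁻¹' {j}).encard ≤ D)
    (hp : 0 < p.toReal) (u : lp (fun _ : J ↦ E) p) (s : Finset I) :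
    ∑ i ∈ s, ‖u (φ i)‖ ^ p.toReal ≤ D * ‖u‖ ^ p.toReal := by
  classical
  refine (sum_comp_le_mul_sum_image (g := fun j ↦ ‖u j‖ ^ p.toReal) hφ
    (fun j ↦ by positivity) s).trans ?_
  gcongr
  exact lp.sum_rpow_le_norm_rpow hp u _

/-- The pullback `u ↦ u ∘ φ` between `ℓ^p` spaces, `p < ∞`, along a map `φ` whose fibres have at
most `D` points. -/
noncomputable def lpPullback [NormedSpace ℝ E] [Fact (1 ≤ p)] (hp : p ≠ ⊤) (φ : I → J) {D : ℕ}
    (hφ : ∀ j, (φ ⁻¹' {j}).encard ≤ D) : lp (fun _ : J ↦ E) p →L[ℝ] lp (fun _ : I ↦ E) p :=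
  have hp₀ : 0 < p.toReal := ENNReal.toReal_pos (zero_lt_one.trans_le Fact.out).ne' hp
  LinearMap.mkContinuous
    { toFun u := ⟨fun i ↦ u (φ i), memℓp_gen' (lp_sum_norm_comp_rpow_le hφ hp₀ u)⟩
      map_add' _ _ := rfl
      map_smul' _ _ := rfl }
    ((D : ℝ) ^ p.toReal⁻¹) fun u ↦ by
      refine lp.norm_le_of_forall_sum_le hp₀ (by positivity) fun s ↦ ?_
      rw [Real.mul_rpow (by positivity) (norm_nonneg _),
        Real.rpow_inv_rpow D.cast_nonneg hp₀.ne']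
      exact lp_sum_norm_comp_rpow_le hφ hp₀ u s

lemma lpPullback_apply [NormedSpace ℝ E] [Fact (1 ≤ p)] (hp : p ≠ ⊤) {φ : I → J} {D : ℕ}
    (hφ : ∀ j, (φ ⁻¹' {j}).encard ≤ D) (u : lp (fun _ : J ↦ E) p) (i : I) :
    lpPullback hp φ hφ u i = u (φ i) :=
  rfl

end LpSpace

section Nemytskii

variable {I E F : Type*} [NormedAddCommGroup E] [NormedAddCommGroup F]

/-- Condition (f1): `f x t = o(t)` as `t → 0`, uniformly in `x`. The point `t = 0` is included, so
that `f x 0 = 0`. -/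
def UniformLittleO (f : I → E → F) : Prop :=
  ∀ ε > 0, ∀ᶠ t in 𝓝 0, ∀ x, ‖f x t‖ ≤ ε * ‖t‖

lemma uniformLittleO_of_continuous {f : I → ℝ → ℝ} (hcont : ∀ x, Continuous (f x))
    (hsmall : ∀ ε > 0, ∃ δ > 0, ∀ x t, t ≠ 0 → |t| < δ → |f x t| ≤ ε * |t|) :
    UniformLittleO f := by
  intro ε hε
  obtain ⟨δ, hδ, h⟩ := hsmall ε hε
  filter_upwards [Metric.ball_mem_nhds 0 hδ] with t ht x
  rw [mem_ball_zero_iff] at ht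
  have hnear : ∀ᶠ s in 𝓝[≠] (0 : ℝ), |f x s| ≤ ε * |s| := by
    filter_upwards [self_mem_nhdsWithin, nhdsWithin_le_nhds (Metric.ball_mem_nhds 0 hδ)]
      with s hs₀ hs
    exact h x s hs₀ (by simpa using hs)
  rcases eq_or_ne t 0 with rfl | ht₀
  · have hlim : Tendsto (fun s ↦ ε * |s| - |f x s|) (𝓝[≠] 0) (𝓝 (ε * |0| - |f x 0|)) :=
      ((by fun_prop : Continuous fun s ↦ ε * |s| - |f x s|).tendsto 0).mono_left nhdsWithin_le_nhds
    exact sub_nonneg.1 (ge_of_tendsto hlim (hnear.mono fun s hs ↦ sub_nonneg.2 hs))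
  · exact h x t ht₀ ht

namespace UniformLittleO

variable {p : ℝ≥0∞} [Fact (1 ≤ p)] {f : I → E → F}

lemma memℓp_comp (hf : UniformLittleO f) (hp : p ≠ ⊤) (u : lp (fun _ : I ↦ E) p) :
    Memℓp (fun x ↦ f x (u x)) p := by
  have hp₀ : 0 < p.toReal := ENNReal.toReal_pos (zero_lt_one.trans_le Fact.out).ne' hp
  refine memℓp_gen (((lp.memℓp u).summable hp₀).of_norm_bounded_eventually ?_)
  filter_upwards [(lp_tendsto_cofinite_zero hp₀ u).eventually (hf 1 one_pos)] with x hx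
  rw [Real.norm_of_nonneg (by positivity)]
  gcongr
  simpa using hx x

/-- The Nemytskii (superposition) operator `u ↦ f(·, u(·))` on `ℓ^p`, `p < ∞`. -/
def nemytskii (hf : UniformLittleO f) (hp : p ≠ ⊤) (u : lp (fun _ : I ↦ E) p) :
    lp (fun _ : I ↦ F) p :=
  ⟨fun x ↦ f x (u x), hf.memℓp_comp hp u⟩

@[simp]
lemma nemytskii_apply (hf : UniformLittleO f) (hp : p ≠ ⊤) (u : lp (fun _ : I ↦ E) p) (x : I) :
    hf.nemytskii hp u x = f x (u x) :=
  rfl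

lemma nemytskii_isLittleO (hf : UniformLittleO f) (hp : p ≠ ⊤) :
    hf.nemytskii hp =o[𝓝 0] (fun u : lp (fun _ : I ↦ E) p ↦ u) := by
  refine Asymptotics.isLittleO_iff.2 fun ε hε ↦ ?_
  obtain ⟨δ, hδ, hδf⟩ := Metric.eventually_nhds_iff.1 (hf ε hε)
  filter_upwards [Metric.ball_mem_nhds 0 hδ] with u hu
  refine lp_norm_le_mul_norm hε.le fun x ↦ hδf ?_ x
  rw [dist_zero_right]
  exact (lp.norm_apply_le_norm (zero_lt_one.trans_le Fact.out).ne' u x).trans_lt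
    (mem_ball_zero_iff.1 hu)

lemma exists_finset_eventually_norm_le (hf : UniformLittleO f) (hp : p ≠ ⊤)
    (u : lp (fun _ : I ↦ E) p) {ε : ℝ} (hε : 0 < ε) :
    ∃ K : Finset I, ∀ᶠ v : lp (fun _ : I ↦ E) p in 𝓝 u,
      ∀ x ∉ K, ‖f x (v x)‖ ≤ ε * ‖v x‖ := by
  obtain ⟨δ, hδ, hδf⟩ := Metric.eventually_nhds_iff.1 (hf ε hε)
  have hp₀ : 0 < p.toReal := ENNReal.toReal_pos (zero_lt_one.trans_le Fact.out).ne' hp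
  have hfin := (lp_tendsto_cofinite_zero hp₀ u).eventually (Metric.ball_mem_nhds 0 (half_pos hδ))
  rw [eventually_cofinite] at hfin
  refine ⟨hfin.toFinset, ?_⟩
  filter_upwards [Metric.ball_mem_nhds u (half_pos hδ)] with v hv x hx
  have hux : dist (u x) 0 < δ / 2 := by simpa using hx
  have hvx : dist (v x) (u x) ≤ dist v u := by
    simpa using (lp.lipschitzWith_one_eval p x).dist_le_mul v u
  refine hδf ?_ x
  linarith [dist_triangle (v x) (u x) 0, Metric.mem_ball.1 hv]

lemma norm_nemytskii_sub_sum_single_le [DecidableEq I] (hf : UniformLittleO f) (hp : p ≠ ⊤)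
    {v : lp (fun _ : I ↦ E) p} {K : Finset I} {ε : ℝ} (hε : 0 ≤ ε)
    (h : ∀ x ∉ K, ‖f x (v x)‖ ≤ ε * ‖v x‖) :
    ‖hf.nemytskii hp v - ∑ x ∈ K, lp.single p x (f x (v x))‖ ≤ ε * ‖v‖ := by
  refine lp_norm_le_mul_norm hε fun y ↦ ?_
  have hsum : (∑ x ∈ K, lp.single p x (f x (v x)) : lp (fun _ : I ↦ F) p) y =
      if y ∈ K then f y (v y) else 0 := by
    rw [lp.coeFn_sum]
    exact (Finset.sum_apply y K _).trans (by simp [lp.single_apply, Finset.sum_pi_single])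
  rw [lp.coeFn_sub, Pi.sub_apply, hsum, nemytskii_apply]
  split_ifs with hy
  · simpa using mul_nonneg hε (norm_nonneg (v y))
  · simpa using h y hy

/- Near `u`, the operator is uniformly approximated by its truncations to finite sets of
coordinates, which are continuous. -/
lemma continuous_nemytskii (hf : UniformLittleO f) (hp : p ≠ ⊤) (hcont : ∀ x, Continuous (f x)) :
    Continuous (hf.nemytskii hp : lp (fun _ : I ↦ E) p → _) := by
  classical
  refine continuous_iff_continuousAt.2 fun u ↦
    continuousAt_of_locally_uniform_approx_of_continuousAt fun U hU ↦ ?_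
  obtain ⟨ε, hε, hεU⟩ := Metric.mem_uniformity_dist.1 hU
  have hη : 0 < ε / (‖u‖ + 1) := by positivity
  obtain ⟨K, hK⟩ := hf.exists_finset_eventually_norm_le hp u hη
  have hbdd : ∀ᶠ v in 𝓝 u, ‖v‖ < ‖u‖ + 1 :=
    continuous_norm.continuousAt.eventually_lt_const (lt_add_one _)
  refine ⟨_, hK.and hbdd, fun v ↦ ∑ x ∈ K, lp.single p x (f x (v x)), ?_, ?_⟩
  · refine (continuous_finsetSum K fun x _ ↦ ?_).continuousAt
    exact (lp.isometry_single x).continuous.comp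
      ((hcont x).comp (lp.lipschitzWith_one_eval p x).continuous)
  · rintro v ⟨hvK, hv⟩
    refine hεU ?_
    rw [dist_eq_norm]
    calc _ ≤ ε / (‖u‖ + 1) * ‖v‖ := hf.norm_nemytskii_sub_sum_single_le hp hη.le hvK
      _ < ε / (‖u‖ + 1) * (‖u‖ + 1) := by gcongr
      _ = ε := div_mul_cancel₀ ε (by positivity)

end UniformLittleO

end Nemytskii

section Primitive

lemma exists_abs_le_sub_eq_mul {F f : ℝ → ℝ} (hF : ∀ t, HasDerivAt F (f t) t) (t h : ℝ) :
    ∃ k, |k| ≤ |h| ∧ F (t + h) - F t = f (t + k) * h := by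
  have hderiv (s : ℝ) : HasDerivAt (fun r ↦ F (t + r * h)) (f (t + s * h) * h) s := by
    have hline : HasDerivAt (fun r ↦ t + r * h) h s := by
      simpa using ((hasDerivAt_id s).mul_const h).const_add t
    exact (hF _).comp s hline
  obtain ⟨θ, ⟨hθ₀, hθ₁⟩, hθ⟩ := exists_hasDerivAt_eq_slope _ _ zero_lt_one
    (HasDerivAt.continuousOn fun s _ ↦ hderiv s) fun s _ ↦ hderiv s
  refine ⟨θ * h, ?_, by simpa using hθ.symm⟩
  rw [abs_mul, abs_of_pos hθ₀]
  exact mul_le_of_le_one_left (abs_nonneg h) hθ₁.le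

variable {I : Type*} {f F : I → ℝ → ℝ}

lemma exists_norm_le_sub_eq_mul (hF : ∀ x t, HasDerivAt (F x) (f x t) t)
    (u h : lp (fun _ : I ↦ ℝ) 2) :
    ∃ k : lp (fun _ : I ↦ ℝ) 2, ‖k‖ ≤ ‖h‖ ∧
      ∀ x, F x (u x + h x) - F x (u x) = f x (u x + k x) * h x := by
  choose k hkh hk using fun x ↦ exists_abs_le_sub_eq_mul (hF x) (u x) (h x)
  exact ⟨⟨k, (lp.memℓp h).mono' hkh⟩, lp.norm_mono two_ne_zero hkh, hk⟩

lemma exists_hasSum_primitive_sub (hf : UniformLittleO f) (hF : ∀ x t, HasDerivAt (F x) (f x t) t)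
    (u h : lp (fun _ : I ↦ ℝ) 2) :
    ∃ k : lp (fun _ : I ↦ ℝ) 2, ‖k‖ ≤ ‖h‖ ∧
      HasSum (fun x ↦ F x ((u + h) x) - F x (u x))
        (inner ℝ (hf.nemytskii (p := 2) ENNReal.ofNat_ne_top (u + k)) h) := by
  obtain ⟨k, hkh, hk⟩ := exists_norm_le_sub_eq_mul hF u h
  refine ⟨k, hkh, ?_⟩
  simpa [hk, mul_comm] using
    lp.hasSum_inner (𝕜 := ℝ) (hf.nemytskii (p := 2) ENNReal.ofNat_ne_top (u + k)) h

lemma summable_primitive (hf : UniformLittleO f) (hF : ∀ x t, HasDerivAt (F x) (f x t) t)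
    (hF₀ : ∀ x, F x 0 = 0) (u : lp (fun _ : I ↦ ℝ) 2) : Summable fun x ↦ F x (u x) := by
  obtain ⟨k, -, hk⟩ := exists_hasSum_primitive_sub hf hF 0 u
  simpa [hF₀] using hk.summable

lemma hasFDerivAt_tsum_primitive (hf : UniformLittleO f) (hcont : ∀ x, Continuous (f x))
    (hF : ∀ x t, HasDerivAt (F x) (f x t) t) (hF₀ : ∀ x, F x 0 = 0) (u : lp (fun _ : I ↦ ℝ) 2) :
    HasFDerivAt (fun v : lp (fun _ : I ↦ ℝ) 2 ↦ ∑' x, F x (v x))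
      (innerSL ℝ (hf.nemytskii (p := 2) ENNReal.ofNat_ne_top u)) u := by
  set N := hf.nemytskii (p := 2) ENNReal.ofNat_ne_top
  rw [hasFDerivAt_iff_isLittleO_nhds_zero, Asymptotics.isLittleO_iff]
  intro ε hε
  obtain ⟨δ, hδ, hδN⟩ := Metric.continuous_iff.1
    (hf.continuous_nemytskii (p := 2) ENNReal.ofNat_ne_top hcont) u ε hε
  filter_upwards [Metric.ball_mem_nhds 0 hδ] with h hh
  obtain ⟨k, hkh, hk⟩ := exists_hasSum_primitive_sub hf hF u h
  have hclose : ‖N (u + k) - N u‖ ≤ ε := by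
    rw [← dist_eq_norm]
    refine (hδN (u + k) ?_).le
    simpa using hkh.trans_lt (mem_ball_zero_iff.1 hh)
  have hsummable := summable_primitive hf hF hF₀
  calc ‖(∑' x, F x ((u + h) x)) - (∑' x, F x (u x)) - innerSL ℝ (N u) h‖
      = ‖inner ℝ (N (u + k) - N u) h‖ := by
        rw [← (hsummable (u + h)).tsum_sub (hsummable u), hk.tsum_eq, innerSL_apply_apply,
          inner_sub_left]
    _ ≤ ‖N (u + k) - N u‖ * ‖h‖ := norm_inner_le_norm _ _
    _ ≤ ε * ‖h‖ := by gcongr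

end Primitive

section GraphEnergy

variable {Vtx : Type*} {adj : Vtx → Vtx → Prop} {Vp : Vtx → ℝ}

lemma gradSq_smul (c : ℝ) (u : Vtx → ℝ) (x : Vtx) :
    gradSq adj (c • u) x = c ^ 2 * gradSq adj u x := by
  have hterm (y : {y // adj x y}) : (c * u y - c * u x) * (c * u y - c * u x) =
      c ^ 2 * ((u y - u x) * (u y - u x)) := by ring
  simp only [gradSq, gammaProd, Pi.smul_apply, smul_eq_mul, hterm, tsum_mul_left]
  ring

lemma nrmV_smul (c : ℝ) (u : Vtx → ℝ) : nrmV adj Vp (c • u) = |c| * nrmV adj Vp u := by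
  have hterm (x : Vtx) : gradSq adj (c • u) x + Vp x * (c • u) x ^ 2 =
      c ^ 2 * (gradSq adj u x + Vp x * u x ^ 2) := by
    rw [gradSq_smul, Pi.smul_apply, smul_eq_mul]
    ring
  simp only [nrmV, hterm, tsum_mul_left]
  rw [Real.sqrt_mul (sq_nonneg c), Real.sqrt_sq_eq_abs]

lemma nrmH_smul (c : ℝ) (u : H1 Vtx) : nrmH adj Vp (c • u) = |c| * nrmH adj Vp u :=
  nrmV_smul c u

lemma ne_zero_of_nrmH_ne_zero {u : H1 Vtx} (hu : nrmH adj Vp u ≠ 0) : u ≠ 0 := by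
  rintro rfl
  exact hu (by simpa using nrmH_smul (adj := adj) (Vp := Vp) 0 0)

variable {D : ℕ}

lemma encard_source_fiber_le (hdeg : ∀ x, {y | adj x y}.encard ≤ D) (x : Vtx) :
    ((fun e : Σ x, {y // adj x y} ↦ e.1) ⁻¹' {x}).encard ≤ D := by
  refine (Set.encard_le_encard_of_injOn (f := fun e ↦ e.2.1) ?_ ?_).trans (hdeg x)
  · rintro ⟨_, y, hy⟩ rfl
    exact hy
  · rintro ⟨_, y, hy⟩ rfl ⟨_, z, hz⟩ rfl (rfl : y = z)
    rfl

lemma encard_target_fiber_le (hsym : ∀ x y, adj x y → adj y x)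
    (hdeg : ∀ x, {y | adj x y}.encard ≤ D) (y : Vtx) :
    ((fun e : Σ x, {y // adj x y} ↦ e.2.1) ⁻¹' {y}).encard ≤ D := by
  refine (Set.encard_le_encard_of_injOn (f := fun e ↦ e.1) ?_ ?_).trans (hdeg y)
  · rintro ⟨x, _, hx⟩ rfl
    exact hsym _ _ hx
  · rintro ⟨x, _, hx⟩ rfl ⟨z, _, hz⟩ h (rfl : x = z)
    obtain rfl := h
    rfl

/-- The discrete gradient `(∇u)(x, y) = u y - u x` on directed edges `x ∼ y`, as a bounded operator
from `ℓ²` of the vertices to `ℓ²` of the edges. -/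
noncomputable def edgeGrad (hsym : ∀ x y, adj x y → adj y x)
    (hdeg : ∀ x, {y | adj x y}.encard ≤ D) :
    H1 Vtx →L[ℝ] lp (fun _ : Σ x, {y // adj x y} ↦ ℝ) 2 :=
  lpPullback (p := 2) ENNReal.ofNat_ne_top _ (encard_target_fiber_le hsym hdeg) -
    lpPullback (p := 2) ENNReal.ofNat_ne_top _ (encard_source_fiber_le hdeg)

lemma hasSum_gradSq (hsym : ∀ x y, adj x y → adj y x) (hdeg : ∀ x, {y | adj x y}.encard ≤ D)
    (u : H1 Vtx) : HasSum (gradSq adj u) (1 / 2 * ‖edgeGrad hsym hdeg u‖ ^ 2) := by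
  have hedges : HasSum (fun e : Σ x, {y // adj x y} ↦ (u e.2.1 - u e.1) ^ 2)
      (‖edgeGrad hsym hdeg u‖ ^ 2) := by
    simpa [edgeGrad, lpPullback_apply] using lp_hasSum_norm_sq (edgeGrad hsym hdeg u)
  have hvertices := hedges.sigma fun x ↦ (hedges.summable.sigma_factor x).hasSum
  have hgrad : gradSq adj u = fun x ↦ 1 / 2 * ∑' y : {y // adj x y}, (u y - u x) ^ 2 := by
    funext x
    simp only [gradSq, gammaProd, sq]
  rw [hgrad]
  exact hvertices.mul_left _

/-- Multiplication by `√V` as a bounded operator on `ℓ²`. -/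
noncomputable def sqrtPotential {C₂ : ℝ} (hV₂ : ∀ x, Vp x ≤ C₂) : H1 Vtx →L[ℝ] H1 Vtx :=
  lp.mapCLM 2 (fun x ↦ √(Vp x) • ContinuousLinearMap.id ℝ ℝ) (Real.sqrt_nonneg C₂) fun x ↦ by
    simpa [norm_smul, abs_of_nonneg (Real.sqrt_nonneg _)] using Real.sqrt_le_sqrt (hV₂ x)

variable {C₁ C₂ : ℝ}

lemma hasSum_potential (hV₀ : ∀ x, 0 ≤ Vp x) (hV₂ : ∀ x, Vp x ≤ C₂) (u : H1 Vtx) :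
    HasSum (fun x ↦ Vp x * u x ^ 2) (‖sqrtPotential hV₂ u‖ ^ 2) := by
  simpa [sqrtPotential, mul_pow, Real.sq_sqrt (hV₀ _)] using
    lp_hasSum_norm_sq (sqrtPotential hV₂ u)

lemma nrmH_sq (hsym : ∀ x y, adj x y → adj y x) (hdeg : ∀ x, {y | adj x y}.encard ≤ D)
    (hV₀ : ∀ x, 0 ≤ Vp x) (hV₂ : ∀ x, Vp x ≤ C₂) (u : H1 Vtx) :
    nrmH adj Vp u ^ 2 = 1 / 2 * ‖edgeGrad hsym hdeg u‖ ^ 2 + ‖sqrtPotential hV₂ u‖ ^ 2 := by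
  have hsum := (hasSum_gradSq hsym hdeg u).add (hasSum_potential hV₀ hV₂ u)
  rw [nrmH, nrmV, hsum.tsum_eq, Real.sq_sqrt (by positivity)]

lemma mul_norm_sq_le_nrmH_sq (hsym : ∀ x y, adj x y → adj y x)
    (hdeg : ∀ x, {y | adj x y}.encard ≤ D) (hC₁ : 0 ≤ C₁) (hV₁ : ∀ x, C₁ ≤ Vp x)
    (hV₂ : ∀ x, Vp x ≤ C₂) (u : H1 Vtx) : C₁ * ‖u‖ ^ 2 ≤ nrmH adj Vp u ^ 2 := by
  have hV₀ (x : Vtx) : 0 ≤ Vp x := hC₁.trans (hV₁ x)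
  calc C₁ * ‖u‖ ^ 2 ≤ ‖sqrtPotential hV₂ u‖ ^ 2 :=
        hasSum_le (fun x ↦ by simpa using mul_le_mul_of_nonneg_right (hV₁ x) (sq_nonneg (u x)))
          ((lp_hasSum_norm_sq u).mul_left C₁) (hasSum_potential hV₀ hV₂ u)
    _ ≤ nrmH adj Vp u ^ 2 := by
        rw [nrmH_sq hsym hdeg hV₀ hV₂]
        exact le_add_of_nonneg_left (by positivity)

lemma exists_hasFDerivAt_nrmH_sq (hsym : ∀ x y, adj x y → adj y x)
    (hdeg : ∀ x, {y | adj x y}.encard ≤ D) (hV₀ : ∀ x, 0 ≤ Vp x) (hV₂ : ∀ x, Vp x ≤ C₂)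
    (u : H1 Vtx) :
    ∃ L : H1 Vtx →L[ℝ] ℝ, HasFDerivAt (fun v ↦ nrmH adj Vp v ^ 2) L u ∧
      L u = 2 * nrmH adj Vp u ^ 2 := by
  have hgrad := ((edgeGrad hsym hdeg).hasFDerivAt (x := u)).norm_sq.const_mul (1 / 2)
  have hpot := ((sqrtPotential hV₂).hasFDerivAt (x := u)).norm_sq
  refine ⟨_, (hgrad.add hpot).congr_of_eventuallyEq (.of_forall (nrmH_sq hsym hdeg hV₀ hV₂)), ?_⟩
  calc _ = 1 / 2 * (2 * ‖edgeGrad hsym hdeg u‖ ^ 2) + 2 * ‖sqrtPotential hV₂ u‖ ^ 2 := by simp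
    _ = 2 * nrmH adj Vp u ^ 2 := by rw [nrmH_sq hsym hdeg hV₀ hV₂]; ring

end GraphEnergy

section Nehari

variable {Vtx : Type*} {adj : Vtx → Vtx → Prop} {D : ℕ} {Vp : Vtx → ℝ} {C₁ C₂ : ℝ}
  {f F : Vtx → ℝ → ℝ}

lemma PhiF_eq (hsym : ∀ x y, adj x y → adj y x) (hdeg : ∀ x, {y | adj x y}.encard ≤ D)
    (hV₀ : ∀ x, 0 ≤ Vp x) (hV₂ : ∀ x, Vp x ≤ C₂) (u : H1 Vtx) :
    PhiF adj Vp F u = 1 / 2 * nrmH adj Vp u ^ 2 - ∑' x, F x (u x) := by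
  have hsum := (hasSum_gradSq hsym hdeg u).add (hasSum_potential hV₀ hV₂ u)
  rw [PhiF, nrmH_sq hsym hdeg hV₀ hV₂, hsum.tsum_eq]

lemma fderiv_PhiF_apply_self (hsym : ∀ x y, adj x y → adj y x)
    (hdeg : ∀ x, {y | adj x y}.encard ≤ D) (hV₀ : ∀ x, 0 ≤ Vp x) (hV₂ : ∀ x, Vp x ≤ C₂)
    (hf : UniformLittleO f) (hcont : ∀ x, Continuous (f x))
    (hF : ∀ x t, HasDerivAt (F x) (f x t) t) (hF₀ : ∀ x, F x 0 = 0) (u : H1 Vtx) :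
    fderiv ℝ (PhiF adj Vp F) u u =
      nrmH adj Vp u ^ 2 - inner ℝ (hf.nemytskii (p := 2) ENNReal.ofNat_ne_top u) u := by
  obtain ⟨L, hL, hLu⟩ := exists_hasFDerivAt_nrmH_sq hsym hdeg hV₀ hV₂ u
  have hPhi : HasFDerivAt (PhiF adj Vp F) _ u :=
    ((hL.const_mul (1 / 2)).sub
      (hasFDerivAt_tsum_primitive hf hcont hF hF₀ u)).congr_of_eventuallyEq
      (.of_forall (PhiF_eq hsym hdeg hV₀ hV₂))
  rw [hPhi.fderiv]
  simp [hLu]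

theorem exists_pos_le_nrmH_of_mem_Nehari (hsym : ∀ x y, adj x y → adj y x)
    (hdeg : ∀ x, {y | adj x y}.encard ≤ D) (hC₁ : 0 < C₁) (hV₁ : ∀ x, C₁ ≤ Vp x)
    (hV₂ : ∀ x, Vp x ≤ C₂) (hf : UniformLittleO f) (hcont : ∀ x, Continuous (f x))
    (hF : ∀ x t, HasDerivAt (F x) (f x t) t) (hF₀ : ∀ x, F x 0 = 0) :
    ∃ ρ > 0, ∀ u ∈ Nehari adj Vp F, ρ ≤ nrmH adj Vp u := by
  obtain ⟨d, hd, hsmall⟩ := Metric.eventually_nhds_iff.1 <|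
    Asymptotics.isLittleO_iff.1 (hf.nemytskii_isLittleO (p := 2) ENNReal.ofNat_ne_top)
      (half_pos hC₁)
  refine ⟨√C₁ * d, by positivity, fun u ⟨hu₀, hu⟩ ↦ ?_⟩
  have hnorm : 0 < ‖u‖ := norm_pos_iff.2 hu₀
  have hcoercive := mul_norm_sq_le_nrmH_sq hsym hdeg hC₁.le hV₁ hV₂ u
  have hd_le : d ≤ ‖u‖ := by
    by_contra! hlt
    rw [fderiv_PhiF_apply_self hsym hdeg (fun x ↦ hC₁.le.trans (hV₁ x)) hV₂ hf hcont hF hF₀,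
      sub_eq_zero] at hu
    have : C₁ * ‖u‖ ^ 2 ≤ C₁ / 2 * ‖u‖ ^ 2 := calc
      C₁ * ‖u‖ ^ 2 ≤ inner ℝ (hf.nemytskii (p := 2) ENNReal.ofNat_ne_top u) u :=
        hcoercive.trans_eq hu
      _ ≤ ‖hf.nemytskii (p := 2) ENNReal.ofNat_ne_top u‖ * ‖u‖ := real_inner_le_norm _ _
      _ ≤ C₁ / 2 * ‖u‖ * ‖u‖ := by gcongr; exact hsmall (by simpa using hlt)
      _ = C₁ / 2 * ‖u‖ ^ 2 := by ring
    nlinarith [mul_pos hC₁ (pow_pos hnorm 2)]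
  refine le_of_sq_le_sq ?_ (Real.sqrt_nonneg _)
  calc (√C₁ * d) ^ 2 = C₁ * d ^ 2 := by rw [mul_pow, Real.sq_sqrt hC₁.le]
    _ ≤ C₁ * ‖u‖ ^ 2 := by gcongr
    _ ≤ nrmH adj Vp u ^ 2 := hcoercive

end Nehari

theorem stmt9_general
    {Vtx : Type*} (adj : Vtx → Vtx → Prop) (D : ℕ)
    (hsym : ∀ x y, adj x y → adj y x)
    (hfin : ∀ x, {y | adj x y}.Finite)
    (hdeg : ∀ x, {y | adj x y}.ncard ≤ D)
    (Vp : Vtx → ℝ) (C1 C2 : ℝ) (hC1 : 0 < C1)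
    (hVbd : ∀ x, C1 ≤ Vp x ∧ Vp x ≤ C2)
    (f : Vtx → ℝ → ℝ) (hcont : ∀ x, Continuous (f x))
    (hsmall : ∀ ε > 0, ∃ δ > 0, ∀ x t, t ≠ 0 → |t| < δ → |f x t| ≤ ε * |t|)
    (F : Vtx → ℝ → ℝ) (hF : ∀ x t, F x t = ∫ s in (0 : ℝ)..t, f x s) :
    ∃ δ > 0, ∀ w : H1 Vtx, nrmH adj Vp w = 1 →
      ∀ s : ℝ, 0 < s → fderiv ℝ (PhiF adj Vp F) (s • w) (s • w) = 0 → δ ≤ s := by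
  have hdeg' (x : Vtx) : {y | adj x y}.encard ≤ D := by
    rw [← (hfin x).cast_ncard_eq]
    exact_mod_cast hdeg x
  have hF' (x : Vtx) (t : ℝ) : HasDerivAt (F x) (f x t) t := by
    rw [funext (hF x)]
    exact (hcont x).integral_hasStrictDerivAt 0 t |>.hasDerivAt
  obtain ⟨ρ, hρ, hNehari⟩ := exists_pos_le_nrmH_of_mem_Nehari hsym hdeg' hC1
    (fun x ↦ (hVbd x).1) (fun x ↦ (hVbd x).2) (uniformLittleO_of_continuous hcont hsmall) hcont hF'
    (fun x ↦ by simp [hF])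
  refine ⟨ρ, hρ, fun w hw s hs hderiv ↦ ?_⟩
  have hw₀ : w ≠ 0 := ne_zero_of_nrmH_ne_zero (hw ▸ one_ne_zero)
  calc ρ ≤ nrmH adj Vp (s • w) := hNehari _ ⟨smul_ne_zero hs.ne' hw₀, hderiv⟩
    _ = s := by rw [nrmH_smul, hw, mul_one, abs_of_pos hs]

/-- Proposition 3.3 (ii): `s_w` is bounded away from `0` on the unit sphere `S`. -/
theorem stmt9
    {Vtx : Type*} (adj : Vtx → Vtx → Prop) (D : ℕ)
    (hsym : ∀ x y, adj x y → adj y x)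
    (hirr : ∀ x, ¬ adj x x)
    (hfin : ∀ x, {y | adj x y}.Finite)
    (hdeg : ∀ x, {y | adj x y}.ncard ≤ D)
    (Vp : Vtx → ℝ) (C1 C2 : ℝ) (hC1 : 0 < C1)
    (hVbd : ∀ x, C1 ≤ Vp x ∧ Vp x ≤ C2)
    (f : Vtx → ℝ → ℝ) (hcont : ∀ x, Continuous (f x))
    (a q : ℝ) (ha : 0 < a) (hq : 2 < q)
    (hgrowth : ∀ x t, |f x t| ≤ a * (|t| + |t| ^ (q - 1)))
    (hsmall : ∀ ε > 0, ∃ δ > 0, ∀ x t, t ≠ 0 → |t| < δ → |f x t| ≤ ε * |t|)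
    (hmono : ∀ x, StrictMonoOn (fun t => f x t / |t|) (Set.Iio 0) ∧
             StrictMonoOn (fun t => f x t / |t|) (Set.Ioi 0))
    (F : Vtx → ℝ → ℝ) (hF : ∀ x t, F x t = ∫ s in (0:ℝ)..t, f x s)
    (hsuper : ∀ M : ℝ, ∃ R > 0, ∀ x t, R ≤ |t| → M ≤ F x t / t ^ 2)
    (sw : H1 Vtx → ℝ)
    (hsw : ∀ w : H1 Vtx, w ≠ 0 → 0 < sw w ∧
      fderiv ℝ (PhiF adj Vp F) (sw w • w) (sw w • w) = 0 ∧
      ∀ s : ℝ, 0 < s → fderiv ℝ (PhiF adj Vp F) (s • w) (s • w) = 0 → s = sw w)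
    :
    ∃ δ > 0, ∀ w : H1 Vtx, nrmH adj Vp w = 1 → δ ≤ sw w := by
  obtain ⟨δ, hδ, h⟩ := stmt9_general adj D hsym hfin hdeg Vp C1 C2 hC1 hVbd f hcont hsmall F hF
  refine ⟨δ, hδ, fun w hw ↦ ?_⟩
  obtain ⟨hs, hderiv, -⟩ := hsw w (ne_zero_of_nrmH_ne_zero (hw ▸ one_ne_zero))
  exact h w hw (sw w) hs hderiv
end
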